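/- arXiv:1810.05707 — 6 statements merged into one kernel-verified Lean document; each statement's English description precedes it below -/
import Mathlib

section
/- Fix 1 < p < ∞, natural numbers l_1,…,l_{d+1}, and let T be the (l_1,…,l_{d+1}) interval tree with levels Λ_0,…,Λ_{d+1}. Suppose 0 < Δ, μ, ν < 1, M > 1, m ∈ ℕ, λ, Θ > 0, and (s_I)_{I∈T} ⊂ (0,∞) are such that (i) s_I ≤ ∑_{J⁻=I} s_J for each I ∈ T \ Λ_{d+1}; (ii) max_{I∈Λ_j} s_I ≤ M·min_{I∈Λ_j} s_I for all 0 ≤ j ≤ d; (iii) s_{[L]}^p > (1−ν/2)·(Θ^p/λ^p)·(∏_{i=1}^{d+1} l_i^{p−1})·∑_{I∈Λ_{d+1}} s_I^p; and (iv) (1−μΔ/M^p)^m < (1−ν/2)·Θ^p/λ^p. For each 0 ≤ j < d let I_j = {I ∈ Λ_j : s_I^p ≤ (1−μ)·l_{j+1}^{p−1}·∑_{J⁻=I} s_J^p} and let B = {j < d : |I_j| ≥ Δ·|Λ_j|}. Then |B| ≤ m. -/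
open Finset

noncomputable section

/-!
The `(l 1, …, l (d+1))` interval tree is encoded as follows: the nodes at level `j`
(for `0 ≤ j ≤ d+1`) are indexed by the natural numbers `k < levN l j`, where
`levN l j = l 1 * ⋯ * l j` is the cardinality of the `j`-th level `Λ_j`.  The children of the
node `k` at level `j` are the nodes `k * l (j+1) + t`, `t < l (j+1)`, at level `j+1`, and the
root (the interval `[L]`) is the node `0` at level `0`.  A family `(x_I)_{I ∈ T}` of reals
indexed by the tree is encoded as `x : ℕ → ℕ → ℝ`, with `x j k` the value at node `k` of
level `j`.
-/

/-- Cardinality of the `j`-th level `Λ_j` of the interval tree. -/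
def levN (l : ℕ → ℕ) (j : ℕ) : ℕ := ∏ i ∈ Finset.Icc 1 j, l i

/-- `∑_{J⁻ = I} x_J`, the sum of `x` over the children of node `k` at level `j`. -/
def childSum (l : ℕ → ℕ) (x : ℕ → ℕ → ℝ) (j k : ℕ) : ℝ :=
  ∑ t ∈ Finset.range (l (j + 1)), x (j + 1) (k * l (j + 1) + t)

/-- `∑_{J⁻ = I} x_J ^ p`, the sum of `x^p` over the children of node `k` at level `j`. -/
def childSumPow (l : ℕ → ℕ) (x : ℕ → ℕ → ℝ) (p : ℝ) (j k : ℕ) : ℝ :=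
  ∑ t ∈ Finset.range (l (j + 1)), x (j + 1) (k * l (j + 1) + t) ^ p

/-!
Let `A_j = (∏_{i ≤ j} l_i^(p-1)) * ∑_{I ∈ Λ_j} s_I^p` (`levelEnergy`). By (i) and Hölder's inequality,
`s_I^p ≤ l_{j+1}^(p-1) * ∑_{J⁻ = I} s_J^p` for every node `I ∈ Λ_j`; summing over the level gives
`A_j ≤ A_{j+1}`. If `j < d` is a bad level, a `Δ`-fraction of these inequalities gains a factor
`1 - μ`. By (ii) on level `j + 1 ≤ d`, the right-hand sides are pairwise comparable up to `M^p`, so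
the nodes with a gain carry at least a `Δ / M^p` fraction of their total, and
`A_j ≤ (1 - μ Δ / M^p) A_{j+1}`. Iterating, `A_0 ≤ (1 - μ Δ / M^p)^|B| A_{d+1}`, whereas (iii) and
(iv) give `A_0 > (1 - μ Δ / M^p)^m A_{d+1}`; hence `|B| < m`.
-/

lemma levN_succ (l : ℕ → ℕ) (j : ℕ) : levN l (j + 1) = levN l j * l (j + 1) := by
  unfold levN
  rw [Finset.prod_Icc_succ_top (by omega)]

lemma sum_range_mul_eq (f : ℕ → ℝ) (N n : ℕ) :
    ∑ k ∈ range (N * n), f k = ∑ k ∈ range N, ∑ t ∈ range n, f (k * n + t) := by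
  induction N with
  | zero => simp
  | succ N ih => rw [Nat.succ_mul, Finset.sum_range_add, ih, Finset.sum_range_succ]

/-- The normalised `p`-energy `(∏_{i ≤ j} l_i^(p-1)) * ∑_{I ∈ Λ_j} s_I^p` of level `j`. -/
def levelEnergy (l : ℕ → ℕ) (s : ℕ → ℕ → ℝ) (p : ℝ) (j : ℕ) : ℝ :=
  (∏ i ∈ Finset.Icc 1 j, (l i : ℝ) ^ (p - 1)) * ∑ k ∈ range (levN l j), s j k ^ p

/-- The energy of level `j + 1`, with the sum grouped by parents on level `j`. -/
lemma levelEnergy_succ (l : ℕ → ℕ) (s : ℕ → ℕ → ℝ) (p : ℝ) (j : ℕ) :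
    levelEnergy l s p (j + 1) = (∏ i ∈ Finset.Icc 1 j, (l i : ℝ) ^ (p - 1)) *
      ∑ k ∈ range (levN l j), (l (j + 1) : ℝ) ^ (p - 1) * childSumPow l s p j k := by
  unfold levelEnergy childSumPow
  rw [Finset.prod_Icc_succ_top (by omega), levN_succ, sum_range_mul_eq, ← Finset.mul_sum, mul_assoc]

/-- If `a ≤ c` termwise, with a gain of `1 - μ` on a subset `S` of proportion at least `Δ`, and the
values of `c` are comparable up to the factor `K`, then the total gains `1 - μ * Δ / K`. -/
lemma sum_le_of_gain {N : ℕ} (hN : 0 < N) {a c : ℕ → ℝ} {S : Finset ℕ} (hS : S ⊆ range N)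
    {Δ μ K : ℝ} (hμ : 0 ≤ μ) (hK : 0 < K)
    (hc : ∀ k < N, 0 ≤ c k) (hac : ∀ k < N, a k ≤ c k) (hgain : ∀ k ∈ S, a k ≤ (1 - μ) * c k)
    (hcomp : ∀ k < N, ∀ k' < N, c k ≤ K * c k') (hcard : Δ * N ≤ S.card) :
    ∑ k ∈ range N, a k ≤ (1 - μ * Δ / K) * ∑ k ∈ range N, c k := by
  have hsplit : ∑ k ∈ range N, a k ≤ ∑ k ∈ range N, c k - μ * ∑ k ∈ S, c k := by
    rw [← Finset.sum_sdiff hS, ← Finset.sum_sdiff (f := c) hS]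
    have e1 : ∑ k ∈ range N \ S, a k ≤ ∑ k ∈ range N \ S, c k :=
      Finset.sum_le_sum fun k hk => hac k (by simpa using (Finset.mem_sdiff.1 hk).1)
    have e2 : ∑ k ∈ S, a k ≤ (1 - μ) * ∑ k ∈ S, c k := by
      rw [Finset.mul_sum]
      exact Finset.sum_le_sum hgain
    linarith
  have hNr : (0 : ℝ) < N := by exact_mod_cast hN
  have hC : 0 ≤ ∑ k ∈ range N, c k :=
    Finset.sum_nonneg fun k hk => hc k (by simpa using hk)
  -- Double counting: sum `c k ≤ K * c k'` over all `k` and over `k' ∈ S`.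
  have hdouble : (S.card : ℝ) * ∑ k ∈ range N, c k ≤ N * (K * ∑ k ∈ S, c k) := by
    have e : ∑ k' ∈ S, ∑ k ∈ range N, c k ≤ ∑ k' ∈ S, ∑ _k ∈ range N, K * c k' :=
      Finset.sum_le_sum fun k' hk' => Finset.sum_le_sum fun k hk =>
        hcomp k (by simpa using hk) k' (by simpa using hS hk')
    simpa [Finset.mul_sum] using e
  have hfrac : Δ * ∑ k ∈ range N, c k ≤ K * ∑ k ∈ S, c k := by
    refine le_of_mul_le_mul_left ?_ hNr
    nlinarith [mul_le_mul_of_nonneg_right hcard hC]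
  have hfrac' : Δ / K * ∑ k ∈ range N, c k ≤ ∑ k ∈ S, c k := by
    rw [div_mul_eq_mul_div, div_le_iff₀ hK]
    linarith
  have := mul_le_mul_of_nonneg_left hfrac' hμ
  have e : (1 - μ * Δ / K) * ∑ k ∈ range N, c k
      = ∑ k ∈ range N, c k - μ * (Δ / K * ∑ k ∈ range N, c k) := by ring
  linarith

/-- The Hölder step at a single node. -/
lemma rpow_le_childSumPow {p : ℝ} (hp : 1 < p) {l : ℕ → ℕ} {s : ℕ → ℕ → ℝ} {j k : ℕ}
    (h0 : 0 < s j k) (hs : ∀ t < l (j + 1), 0 < s (j + 1) (k * l (j + 1) + t))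
    (h : s j k ≤ childSum l s j k) :
    s j k ^ p ≤ (l (j + 1) : ℝ) ^ (p - 1) * childSumPow l s p j k := by
  refine (Real.rpow_le_rpow h0.le h (by linarith)).trans ?_
  have := Real.rpow_sum_le_const_mul_sum_rpow_of_nonneg (s := range (l (j + 1)))
    (f := fun t => s (j + 1) (k * l (j + 1) + t)) hp.le
    (fun t ht => (hs t (by simpa using ht)).le)
  simpa [childSum, childSumPow] using this

lemma child_lt_levN {l : ℕ → ℕ} {j k t : ℕ} (hk : k < levN l j) (ht : t < l (j + 1)) :
    k * l (j + 1) + t < levN l (j + 1) := by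
  rw [levN_succ]
  nlinarith [Nat.mul_le_mul_right (l (j + 1)) (Nat.succ_le_of_lt hk)]

open Classical in
/-- Lemma 3.4 (coarse-differentiation-type lemma): the number of levels on which a
`Δ`-fraction of the nodes are "bad" is at most `m`. -/
theorem goodX_lemma (p : ℝ) (hp : 1 < p) (d : ℕ) (l : ℕ → ℕ)
    (hl : ∀ i ∈ Finset.Icc 1 (d + 1), 0 < l i)
    (Δ μ ν : ℝ) (hΔ : 0 < Δ) (hΔ1 : Δ < 1) (hμ : 0 < μ) (hμ1 : μ < 1)
    (hν : 0 < ν) (hν1 : ν < 1)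
    (M : ℝ) (hM : 1 < M) (m : ℕ) (lam Θ : ℝ) (hlam : 0 < lam) (hΘ : 0 < Θ)
    (s : ℕ → ℕ → ℝ)
    (hpos : ∀ j ≤ d + 1, ∀ k < levN l j, 0 < s j k)
    (h1 : ∀ j ≤ d, ∀ k < levN l j, s j k ≤ childSum l s j k)
    (h2 : ∀ j ≤ d, ∀ k < levN l j, ∀ k' < levN l j, s j k ≤ M * s j k')
    (h3 : s 0 0 ^ p > (1 - ν / 2) * (Θ ^ p / lam ^ p) *
      (∏ i ∈ Finset.Icc 1 (d + 1), (l i : ℝ) ^ (p - 1)) *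
      ∑ k ∈ Finset.range (levN l (d + 1)), s (d + 1) k ^ p)
    (h4 : (1 - μ * Δ / M ^ p) ^ m < (1 - ν / 2) * Θ ^ p / lam ^ p) :
    ((Finset.range d).filter fun j =>
        Δ * (levN l j : ℝ) ≤
          (((Finset.range (levN l j)).filter fun k =>
            s j k ^ p ≤ (1 - μ) * (l (j + 1) : ℝ) ^ (p - 1) * childSumPow l s p j k).card : ℝ)).card
      ≤ m := by
  have hM0 : 0 < M := by linarith
  have hMp : 1 < M ^ p := Real.one_lt_rpow hM (by linarith)
  have hK : 0 < M ^ p := by linarith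
  have hx0 : 0 < μ * Δ / M ^ p := by positivity
  have hx1 : μ * Δ / M ^ p < 1 := by
    rw [div_lt_one hK]
    nlinarith
  set q : ℝ := 1 - μ * Δ / M ^ p with hq
  have hq0 : 0 < q := by linarith
  have hq1 : q < 1 := by linarith
  have hlev : ∀ j ≤ d + 1, 0 < levN l j := fun j hj =>
    Finset.prod_pos fun i hi => hl i (by simp only [Finset.mem_Icc] at hi ⊢; omega)
  have hP : ∀ j ≤ d + 1, 0 < ∏ i ∈ Finset.Icc 1 j, (l i : ℝ) ^ (p - 1) := fun j hj =>
    Finset.prod_pos fun i hi => Real.rpow_pos_of_pos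
      (by exact_mod_cast hl i (by simp only [Finset.mem_Icc] at hi ⊢; omega)) _
  have hE : ∀ j ≤ d + 1, 0 < levelEnergy l s p j := fun j hj =>
    mul_pos (hP j hj) (Finset.sum_pos
      (fun k hk => Real.rpow_pos_of_pos (hpos j hj k (by simpa using hk)) _)
      (Finset.nonempty_range_iff.2 (hlev j hj).ne'))
  have hchild : ∀ j ≤ d, ∀ k < levN l j, ∀ t < l (j + 1), 0 < s (j + 1) (k * l (j + 1) + t) :=
    fun j hj k hk t ht => hpos (j + 1) (by omega) _ (child_lt_levN hk ht)
  have hholder : ∀ j ≤ d, ∀ k < levN l j,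
      s j k ^ p ≤ (l (j + 1) : ℝ) ^ (p - 1) * childSumPow l s p j k := fun j hj k hk =>
    rpow_le_childSumPow hp (hpos j (by omega) k hk) (hchild j hj k hk) (h1 j hj k hk)
  have hmono : ∀ j ≤ d, levelEnergy l s p j ≤ levelEnergy l s p (j + 1) := by
    intro j hj
    rw [levelEnergy_succ]
    exact mul_le_mul_of_nonneg_left
      (Finset.sum_le_sum fun k hk => hholder j hj k (by simpa using hk)) (hP j (by omega)).le
  have hcomp : ∀ j < d, ∀ k < levN l j, ∀ k' < levN l j,
      (l (j + 1) : ℝ) ^ (p - 1) * childSumPow l s p j k ≤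
        M ^ p * ((l (j + 1) : ℝ) ^ (p - 1) * childSumPow l s p j k') := by
    intro j hj k hk k' hk'
    rw [mul_left_comm]
    refine mul_le_mul_of_nonneg_left ?_ (by positivity)
    unfold childSumPow
    rw [Finset.mul_sum]
    refine Finset.sum_le_sum fun t ht => ?_
    have ht : t < l (j + 1) := by simpa using ht
    have a := hchild j hj.le k hk t ht
    have b := hchild j hj.le k' hk' t ht
    rw [← Real.mul_rpow hM0.le b.le]
    exact Real.rpow_le_rpow a.le
      (h2 (j + 1) (by omega) _ (child_lt_levN hk ht) _ (child_lt_levN hk' ht)) (by linarith)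
  set bad : ℕ → Prop := fun j => Δ * (levN l j : ℝ) ≤
    (((Finset.range (levN l j)).filter fun k =>
      s j k ^ p ≤ (1 - μ) * (l (j + 1) : ℝ) ^ (p - 1) * childSumPow l s p j k).card : ℝ) with hbad
  have hgain : ∀ j < d, bad j → levelEnergy l s p j ≤ q * levelEnergy l s p (j + 1) := by
    intro j hj hb
    rw [levelEnergy_succ, mul_left_comm]
    refine mul_le_mul_of_nonneg_left ?_ (hP j (by omega)).le
    refine sum_le_of_gain (hlev j (by omega)) (Finset.filter_subset _ _) hμ.le hK
      (fun k hk => ?_) (hholder j hj.le) (fun k hk => ?_) (hcomp j hj) hb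
    · exact (Real.rpow_nonneg (hpos j (by omega) k hk).le p).trans (hholder j hj.le k hk)
    · rw [← mul_assoc]
      exact (Finset.mem_filter.1 hk).2
  have hiter : ∀ n ≤ d, levelEnergy l s p 0 ≤
      q ^ ((Finset.range n).filter bad).card * levelEnergy l s p n := by
    intro n
    induction n with
    | zero => intro _; simp
    | succ n ih =>
      intro hn
      refine (ih (by omega)).trans ?_
      by_cases hb : bad n
      · rw [Finset.range_add_one, Finset.filter_insert, if_pos hb,
          Finset.card_insert_of_notMem (by simp), pow_succ, mul_assoc]
        exact mul_le_mul_of_nonneg_left (hgain n (by omega) hb) (by positivity)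
      · rw [Finset.range_add_one, Finset.filter_insert, if_neg hb]
        exact mul_le_mul_of_nonneg_left (hmono n (by omega)) (by positivity)
  have hup : levelEnergy l s p 0 ≤
      q ^ ((Finset.range d).filter bad).card * levelEnergy l s p (d + 1) :=
    (hiter d le_rfl).trans (mul_le_mul_of_nonneg_left (hmono d le_rfl) (by positivity))
  have hlow : q ^ m * levelEnergy l s p (d + 1) < levelEnergy l s p 0 := by
    have h0 : levelEnergy l s p 0 = s 0 0 ^ p := by simp [levelEnergy, levN]
    rw [h0]
    refine lt_trans (mul_lt_mul_of_pos_right h4 (hE (d + 1) le_rfl)) ?_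
    rw [mul_div_assoc]
    unfold levelEnergy
    rw [← mul_assoc]
    exact h3
  have hpow := lt_of_mul_lt_mul_right (hlow.trans_le hup) (hE (d + 1) le_rfl).le
  exact ((pow_lt_pow_iff_right_of_lt_one₀ hq0 hq1).1 hpow).le
end
end

section
/- Let (X,d_X),(Y,d_Y) be metric spaces, F : X → Y a map, L ∈ ℕ, f : 2^L → X, 1 < p < ∞, and let I_1,…,I_m be pairwise disjoint nonempty subsets of [L] = {1,…,L} with union I. Suppose b > 0 is such that every g : 2^m → X satisfies 𝔼_δ ϱ_Y^g(δ,−δ)^p ≤ b^p·m^{p−1}·∑_{j=1}^m 𝔼_δ ϱ_X^g(δ, d_jδ)^p. Then 𝔼_ε ϱ_Y^f(ε, Iε)^p ≤ b^p·m^{p−1}·∑_{j=1}^m 𝔼_ε ϱ_X^f(ε, I_jε)^p. -/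
/-!
Partial flips along the blocks turn `f` into maps on the `m`-cube: for fixed `ε`, put
`g_ε δ = f (blockFlip S δ ε)`, where `blockFlip S δ ε` flips in `ε` every block `S j` with
`δ j = true`. Since the blocks are disjoint, negating `δ` amounts to flipping the whole union of the
blocks (`blockFlip_negCube`), and flipping the `j`-th coordinate of `δ` amounts to flipping `S j`
(`blockFlip_flipCoord`). The hypothesis applied to `g_ε` is then averaged over `ε`; for each fixed
`δ` the map `blockFlip S δ` is an involution of the `L`-cube, hence preserves the uniform measure,
so the average over `δ` disappears (`cubeE_cubeE_blockFlip`).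
-/

open Finset

noncomputable section

/-- Normalized Hamming distance on the cube `{±1}^n` (modeled as `Fin n → Bool`). -/
def hdist (n : ℕ) (ε δ : Fin n → Bool) : ℝ :=
  ((Finset.univ.filter fun i => ε i ≠ δ i).card : ℝ) / n

/-- `-ε`: flip all coordinates. -/
def negCube {n : ℕ} (ε : Fin n → Bool) : Fin n → Bool := fun i => !(ε i)

/-- `d_i ε`: flip the `i`-th coordinate. -/
def flipCoord {n : ℕ} (i : Fin n) (ε : Fin n → Bool) : Fin n → Bool :=
  Function.update ε i (!(ε i))

/-- Expectation with respect to the uniform probability measure on the cube. -/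
def cubeE (n : ℕ) (Φ : (Fin n → Bool) → ℝ) : ℝ :=
  (∑ ε : Fin n → Bool, Φ ε) / 2 ^ n

/-- Lipschitz constant of a map from the cube (with metric `hdist`) into a metric space,
with the convention `0 / 0 = 0`. -/
def cubeLip {n : ℕ} {X : Type} [MetricSpace X] (f : (Fin n → Bool) → X) : ℝ :=
  sSup { r : ℝ | ∃ ε δ, r = dist (f ε) (f δ) / hdist n ε δ }

/-- A map between (bundled) metric spaces. -/
structure MetricMap where
  X : Type
  Y : Type
  mX : MetricSpace X
  mY : MetricSpace Y
  F : X → Y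

attribute [instance] MetricMap.mX MetricMap.mY

/-- `Sε`: flip the coordinates of `ε` lying in the set `S`. -/
def flipSet {n : ℕ} (S : Finset (Fin n)) (ε : Fin n → Bool) : Fin n → Bool :=
  fun i => if i ∈ S then !(ε i) else ε i

/-- Flip in `ε` all the blocks `S j` with `δ j = true`. -/
def blockFlip {L m : ℕ} (S : Fin m → Finset (Fin L)) (δ : Fin m → Bool) (ε : Fin L → Bool) :
    Fin L → Bool :=
  flipSet ((Finset.univ.filter fun j => δ j = true).biUnion S) ε

lemma flipSet_involutive {n : ℕ} (A : Finset (Fin n)) : Function.Involutive (flipSet A) := by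
  intro ε
  funext i
  by_cases h : i ∈ A <;> simp [flipSet, h]

/-- By disjointness, membership of a point of `S j` in the flipped region only depends on `δ j`. -/
lemma blockFlip_apply_of_mem {L m : ℕ} {S : Fin m → Finset (Fin L)}
    (hdisj : ∀ i j : Fin m, i ≠ j → Disjoint (S i) (S j)) (δ : Fin m → Bool) (ε : Fin L → Bool)
    {i : Fin L} {j : Fin m} (hi : i ∈ S j) :
    blockFlip S δ ε i = if δ j = true then !(ε i) else ε i := by
  have key : (i ∈ (Finset.univ.filter fun j => δ j = true).biUnion S) ↔ δ j = true := by
    simp only [Finset.mem_biUnion, Finset.mem_filter, Finset.mem_univ, true_and]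
    constructor
    · rintro ⟨k, hk, hik⟩
      by_cases hkj : k = j
      · exact hkj ▸ hk
      · exact absurd hi (Finset.disjoint_left.mp (hdisj k j hkj) hik)
    · exact fun h => ⟨j, h, hi⟩
  simp only [blockFlip, flipSet, key]

lemma blockFlip_apply_of_notMem {L m : ℕ} {S : Fin m → Finset (Fin L)} (δ : Fin m → Bool)
    (ε : Fin L → Bool) {i : Fin L} (hi : ∀ j, i ∉ S j) : blockFlip S δ ε i = ε i := by
  simp [blockFlip, flipSet, hi]

lemma blockFlip_negCube {L m : ℕ} {S : Fin m → Finset (Fin L)}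
    (hdisj : ∀ i j : Fin m, i ≠ j → Disjoint (S i) (S j)) (δ : Fin m → Bool) (ε : Fin L → Bool) :
    blockFlip S (negCube δ) ε = flipSet (Finset.univ.biUnion S) (blockFlip S δ ε) := by
  funext i
  by_cases h : ∃ j, i ∈ S j
  · obtain ⟨j, hj⟩ := h
    have hU : i ∈ Finset.univ.biUnion S := Finset.mem_biUnion.mpr ⟨j, Finset.mem_univ j, hj⟩
    rw [blockFlip_apply_of_mem hdisj _ _ hj]
    simp only [flipSet, hU, if_true]
    rw [blockFlip_apply_of_mem hdisj _ _ hj]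
    cases hδ : δ j <;> simp [negCube, hδ]
  · push Not at h
    have hU : i ∉ Finset.univ.biUnion S := by simpa using h
    rw [blockFlip_apply_of_notMem _ _ h]
    simp only [flipSet, hU, if_false]
    rw [blockFlip_apply_of_notMem _ _ h]

lemma blockFlip_flipCoord {L m : ℕ} {S : Fin m → Finset (Fin L)}
    (hdisj : ∀ i j : Fin m, i ≠ j → Disjoint (S i) (S j)) (k : Fin m) (δ : Fin m → Bool)
    (ε : Fin L → Bool) :
    blockFlip S (flipCoord k δ) ε = flipSet (S k) (blockFlip S δ ε) := by
  funext i
  by_cases h : ∃ j, i ∈ S j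
  · obtain ⟨j, hj⟩ := h
    rw [blockFlip_apply_of_mem hdisj _ _ hj]
    simp only [flipSet]
    rw [blockFlip_apply_of_mem hdisj _ _ hj]
    by_cases hjk : j = k
    · subst hjk
      cases hδ : δ j <;> simp [flipCoord, hδ, hj]
    · have hk : i ∉ S k := Finset.disjoint_left.mp (hdisj j k hjk) hj
      simp [flipCoord, Function.update_of_ne hjk, hk]
  · push Not at h
    rw [blockFlip_apply_of_notMem _ _ h]
    simp only [flipSet, h k, if_false]
    rw [blockFlip_apply_of_notMem _ _ h]

lemma cubeE_mono {n : ℕ} {Φ Ψ : (Fin n → Bool) → ℝ} (h : ∀ ε, Φ ε ≤ Ψ ε) :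
    cubeE n Φ ≤ cubeE n Ψ :=
  div_le_div_of_nonneg_right (Finset.sum_le_sum fun ε _ => h ε) (by positivity)

lemma cubeE_const_mul_sum {n m : ℕ} (c : ℝ) (Φ : Fin m → (Fin n → Bool) → ℝ) :
    cubeE n (fun ε => c * ∑ j, Φ j ε) = c * ∑ j, cubeE n (Φ j) := by
  simp only [cubeE]
  rw [← Finset.mul_sum, Finset.sum_comm, ← Finset.sum_div, mul_div_assoc]

/-- Each `blockFlip S δ` preserves the uniform measure, so averaging over `δ` as well changes
nothing. -/
lemma cubeE_cubeE_blockFlip {L m : ℕ} (S : Fin m → Finset (Fin L)) (Φ : (Fin L → Bool) → ℝ) :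
    cubeE L (fun ε => cubeE m (fun δ => Φ (blockFlip S δ ε))) = cubeE L Φ := by
  have inv : ∀ δ : Fin m → Bool, ∑ ε, Φ (blockFlip S δ ε) = ∑ ε, Φ ε := fun δ =>
    (flipSet_involutive ((Finset.univ.filter fun j => δ j = true).biUnion S)).bijective.sum_comp Φ
  simp only [cubeE]
  rw [← Finset.sum_div, Finset.sum_comm, Finset.sum_congr rfl fun δ _ => inv δ]
  simp

/-- The "self-improvement" substitution: if the `b_{p,m}`-type inequality holds for all maps
`g : 2^m → X` (with respect to `F`), then it transfers to flips along pairwise disjoint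
nonempty sets `I_1, …, I_m ⊂ [L]` with union `I`. -/
theorem bConst_transfer (X Y : Type) [MetricSpace X] [MetricSpace Y] (F : X → Y)
    (L : ℕ) (f : (Fin L → Bool) → X) (p : ℝ) (hp : 1 < p)
    (m : ℕ) (hm : 0 < m) (S : Fin m → Finset (Fin L))
    (hdisj : ∀ i j : Fin m, i ≠ j → Disjoint (S i) (S j))
    (hne : ∀ j : Fin m, (S j).Nonempty)
    (b : ℝ) (hb : 0 < b)
    (hineq : ∀ g : (Fin m → Bool) → X,
      cubeE m (fun δ => dist (F (g δ)) (F (g (negCube δ))) ^ p)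
        ≤ b ^ p * (m : ℝ) ^ (p - 1) *
          ∑ j : Fin m, cubeE m (fun δ => dist (g δ) (g (flipCoord j δ)) ^ p)) :
    cubeE L (fun ε => dist (F (f ε)) (F (f (flipSet (Finset.univ.biUnion S) ε))) ^ p)
      ≤ b ^ p * (m : ℝ) ^ (p - 1) *
        ∑ j : Fin m, cubeE L (fun ε => dist (f ε) (f (flipSet (S j) ε)) ^ p) := by
  have h := cubeE_mono fun ε => hineq fun δ => f (blockFlip S δ ε)
  simp only [blockFlip_negCube hdisj, blockFlip_flipCoord hdisj] at h
  rw [cubeE_const_mul_sum, cubeE_cubeE_blockFlip S fun ε =>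
    dist (F (f ε)) (F (f (flipSet (Finset.univ.biUnion S) ε))) ^ p] at h
  rwa [Finset.sum_congr rfl fun j _ => cubeE_cubeE_blockFlip S fun ε =>
    dist (f ε) (f (flipSet (S j) ε)) ^ p] at h
end
end

section
/- Let 𝓕 be a family of maps between metric spaces with λ = sup_{F∈𝓕} Lip(F) ∈ (0,∞). Suppose Θ > 0 is such that for every 0 < ϑ < Θ, every D > 1, and every l ∈ ℕ, there exist F : X → Y in 𝓕 and h : 2^l → X such that F∘h is injective with dist(F∘h) ≤ D and d_Y(F(h(ε₁)), F(h(ε₂))) ≥ ϑ·d_X(h(ε₁), h(ε₂)) for all ε₁, ε₂ ∈ 2^l. Then c(𝓕) ≥ Θ. -/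
/-!
The proof is a metric-type (Bourgain–Milman–Wolfson) argument. The hypothesis supplies maps
`h : 2^l → X` for which `F ∘ h` is almost isometric up to scaling; since `F` is `lam`-Lipschitz and
`ϑ`-co-Lipschitz on the image of `h`, the map `h` itself satisfies `α ∂ ≤ d_X ≤ β ∂` with `β / α`
bounded independently of `l`. It remains to find inside `2^l`, for `l = n ^ k` large, a rescaled
copy of `2^n` on which `h` is almost isometric: `F ∘ h` automatically remains so there.

* `cube_dichotomy`: for `g : 2^n → X` the inequality
  `∑ d(g ε, g (-ε))² ≤ n ∑ᵢ ∑ d(g ε, g (dᵢ ε))²` always holds, by the triangle inequality along a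
  path from `ε` to `-ε` and Cauchy–Schwarz. Near-equality forces all edges to have almost the same
  length and all antipodal pairs to be almost `n` edges apart, so that `g` is almost a multiple of
  an isometry. Hence either `g` is `D`-isometric up to scaling, or the inequality improves by a
  factor `θ < 1` depending only on `n` and `D`.
* `exists_good_subcube`: if no block subcube of `2^(n^k)` is good, the improved inequality, averaged
  over all translates and iterated over blocks of length `1, n, n², …`, gives `α² ≤ θ^k β²`
  (`interval_sum_le`), which is false for large `k`.
-/

open Finset

noncomputable section

/-- Lipschitz constant of the "inverse" of a map from the cube: `sup ∂(ε,δ)/d(f(ε),f(δ))`,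
with the convention `0 / 0 = 0`.  For an injective `f` this is `Lip(f⁻¹)`. -/
def cubeCoLip {n : ℕ} {X : Type} [MetricSpace X] (f : (Fin n → Bool) → X) : ℝ :=
  sSup { r : ℝ | ∃ ε δ, r = hdist n ε δ / dist (f ε) (f δ) }

/-- The distortion `dist(f) = Lip(f)·Lip(f⁻¹)` of an (injective) map from the cube. -/
def cubeDistortion {n : ℕ} {X : Type} [MetricSpace X] (f : (Fin n → Bool) → X) : ℝ :=
  cubeLip f * cubeCoLip f

/-- `c(𝓕)`: the supremum of those `c > 0` witnessing the factorization of the Hamming cubes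
(`sSup ∅ = 0` in `ℝ`, matching the convention `c(𝓕) = 0` if no such `c` exists). -/
def cConst (𝓕 : Set MetricMap) : ℝ :=
  sSup { c : ℝ | 0 < c ∧ ∀ D : ℝ, 1 < D → ∀ n : ℕ, 0 < n →
    ∃ G ∈ 𝓕, ∃ f : (Fin n → Bool) → G.X, ∃ a b : ℝ, 0 < a ∧ 0 < b ∧ a * c ≤ b ∧
      ∀ ε δ : Fin n → Bool,
        a / D * hdist n ε δ ≤ dist (f ε) (f δ) ∧
        dist (f ε) (f δ) ≤ a * D * hdist n ε δ ∧
        b / D * hdist n ε δ ≤ dist (G.F (f ε)) (G.F (f δ)) ∧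
        dist (G.F (f ε)) (G.F (f δ)) ≤ b * D * hdist n ε δ }

/-! ### Hamming distance and flips -/

lemma hdist_eq (n : ℕ) (ε δ : Fin n → Bool) : hdist n ε δ = (hammingDist ε δ : ℝ) / n := rfl

lemma flipCoord_invol {n : ℕ} (i : Fin n) (ε : Fin n → Bool) :
    flipCoord i (flipCoord i ε) = ε := by
  funext j
  by_cases h : j = i
  · subst h; simp [flipCoord]
  · simp [flipCoord, h]

lemma hammingDist_flip {n : ℕ} (ε δ : Fin n → Bool) (i : Fin n) (h : ε i ≠ δ i) :
    hammingDist (flipCoord i ε) δ + 1 = hammingDist ε δ := by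
  unfold hammingDist
  have : (univ.filter fun j => ε j ≠ δ j)
      = insert i (univ.filter fun j => flipCoord i ε j ≠ δ j) := by
    ext j
    rw [mem_insert, mem_filter, mem_filter]
    by_cases hj : j = i
    · subst hj; simp [h]
    · simp [flipCoord, hj]
  rw [this, card_insert_of_notMem]
  have h2 : (!ε i) = δ i := by revert h; cases ε i <;> cases δ i <;> simp
  simp [flipCoord, h2]

lemma hammingDist_self_flip {n : ℕ} (ε : Fin n → Bool) (i : Fin n) :
    hammingDist ε (flipCoord i ε) = 1 := by
  have := hammingDist_flip ε (flipCoord i ε) i (by simp [flipCoord])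
  simpa using this.symm

lemma hammingDist_neg {n : ℕ} (ε δ : Fin n → Bool) :
    hammingDist δ (negCube ε) + hammingDist ε δ = n := by
  unfold hammingDist
  have := card_filter_add_card_filter_not (s := (univ : Finset (Fin n))) (fun j => ε j ≠ δ j)
  rw [card_univ, Fintype.card_fin] at this
  rw [add_comm]
  refine Eq.trans ?_ this
  congr 2
  ext j
  rw [mem_filter, mem_filter, negCube]
  generalize ε j = u
  generalize δ j = v
  cases u <;> cases v <;> simp

lemma hammingDist_self_neg {n : ℕ} (ε : Fin n → Bool) :
    hammingDist ε (negCube ε) = n := by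
  simpa using hammingDist_neg ε ε

lemma dist_le_of_edges {n : ℕ} {X : Type} [PseudoMetricSpace X] (g : (Fin n → Bool) → X) (c : ℝ)
    (hc : ∀ ε i, dist (g ε) (g (flipCoord i ε)) ≤ c) (ε δ : Fin n → Bool) :
    dist (g ε) (g δ) ≤ hammingDist ε δ * c := by
  induction hk : hammingDist ε δ generalizing ε with
  | zero =>
    have : ε = δ := hammingDist_eq_zero.1 hk
    simp [this]
  | succ k ih =>
    obtain ⟨i, hi⟩ : ∃ i, ε i ≠ δ i := by
      by_contra! hne
      have : ε = δ := funext hne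
      simp [this] at hk
    have h1 := hammingDist_flip ε δ i hi
    have h2 := ih (flipCoord i ε) (by omega)
    have h3 := dist_triangle (g ε) (g (flipCoord i ε)) (g δ)
    have h4 := hc ε i
    push_cast
    linarith

/-! ### The dichotomy for maps on a fixed cube -/

/-- The `k`-th vertex on the path from `ε` to `-ε` that flips the coordinates in the order
`π 0, π 1, …`. -/
def pathPt {n : ℕ} (π : Equiv.Perm (Fin n)) (k : ℕ) (ε : Fin n → Bool) : Fin n → Bool :=
  fun j => if (π.symm j : ℕ) < k then !(ε j) else ε j

lemma pathPt_invol {n : ℕ} (π : Equiv.Perm (Fin n)) (k : ℕ) :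
    Function.Involutive (pathPt π k) := by
  intro ε
  funext j
  by_cases h : (π.symm j : ℕ) < k <;> simp [pathPt, h]

lemma pathPt_succ {n : ℕ} (π : Equiv.Perm (Fin n)) (k : Fin n) (ε : Fin n → Bool) :
    pathPt π (k + 1) ε = flipCoord (π k) (pathPt π k ε) := by
  funext j
  by_cases h : j = π k
  · subst h; simp [pathPt, flipCoord]
  · have : (π.symm j : ℕ) ≠ k := by
      intro h'
      exact h (by rw [← Fin.ext h']; simp)
    have h2 : (π.symm j : ℕ) < k + 1 ↔ (π.symm j : ℕ) < k := by omega
    simp [pathPt, flipCoord, h, h2]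

/-- If `p` has `n` entries with `A ≤ ∑ p` and `n ∑ p²` exceeds `A²` by at most `n κ`, every entry
of `p` is within `√κ` of `A / n`: quantitative equality case of Cauchy–Schwarz. -/
lemma cs_defect {n : ℕ} (hn : 0 < n) (p : Fin n → ℝ) (A κ : ℝ) (hA : 0 ≤ A)
    (hle : A ≤ ∑ k, p k) (hd : n * ∑ k, p k ^ 2 - A ^ 2 ≤ n * κ) (k : Fin n) :
    |p k - A / n| ≤ √κ := by
  have hn' : (0 : ℝ) < n := by exact_mod_cast hn
  apply Real.abs_le_sqrt
  have h1 : (p k - A / n) ^ 2 ≤ ∑ k, (p k - A / n) ^ 2 :=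
    single_le_sum (f := fun k => (p k - A / n) ^ 2) (fun _ _ => sq_nonneg _) (mem_univ k)
  have h2 : ∑ k, (p k - A / n) ^ 2 = ∑ k, p k ^ 2 - 2 * (A / n) * ∑ k, p k + n * (A / n) ^ 2 := by
    simp only [sub_sq, sum_add_distrib, sum_sub_distrib, sum_const, card_univ, Fintype.card_fin,
      nsmul_eq_mul, mul_sum]
    congr 2
    exact sum_congr rfl fun _ _ => by ring
  have h3 : 2 * (A / n) * A ≤ 2 * (A / n) * ∑ k, p k := by gcongr
  have h4 : n * (∑ k, p k ^ 2 - A ^ 2 / n) ≤ n * κ := by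
    have : n * (∑ k, p k ^ 2 - A ^ 2 / n) = n * ∑ k, p k ^ 2 - A ^ 2 := by field_simp
    linarith
  have h5 := le_of_mul_le_mul_left h4 hn'
  have h6 : 2 * (A / n) * A = 2 * (A ^ 2 / n) := by ring
  have h7 : n * (A / n) ^ 2 = A ^ 2 / n := by field_simp
  linarith

/-- If the antipodal sum is within a factor `1 - η` of its maximal value, each edge at `ε` has
length close to `d(g ε, g (-ε)) / n`. -/
lemma edge_near {n : ℕ} (hn : 0 < n) {X : Type} [MetricSpace X] (g : (Fin n → Bool) → X) (η T : ℝ)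
    (hT : T = ∑ i : Fin n, ∑ ε, dist (g ε) (g (flipCoord i ε)) ^ 2)
    (hlow : (1 - η) * n * T ≤ ∑ ε, dist (g ε) (g (negCube ε)) ^ 2)
    (ε : Fin n → Bool) (i : Fin n) :
    |dist (g ε) (g (flipCoord i ε)) - dist (g ε) (g (negCube ε)) / n| ≤ √(η * T) := by
  -- a flipping order that starts with the coordinate `i`
  let z : Fin n := ⟨0, hn⟩
  let π : Equiv.Perm (Fin n) := Equiv.swap z i
  let p : (Fin n → Bool) → Fin n → ℝ := fun ε k =>
    dist (g (pathPt π k ε)) (g (flipCoord (π k) (pathPt π k ε)))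
  have hp0 : ∀ ε, pathPt π 0 ε = ε := fun ε => by funext j; simp [pathPt]
  have hpn : ∀ ε, pathPt π n ε = negCube ε := fun ε => by funext j; simp [pathPt, negCube]
  have hle : ∀ ε, dist (g ε) (g (negCube ε)) ≤ ∑ k, p ε k := by
    intro ε
    have h := dist_le_range_sum_dist (fun k => g (pathPt π k ε)) n
    simp only [hp0, hpn] at h
    rw [← Fin.sum_univ_eq_sum_range
      (fun k => dist (g (pathPt π k ε)) (g (pathPt π (k + 1) ε)))] at h
    refine h.trans (le_of_eq (sum_congr rfl fun k _ => ?_))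
    rw [pathPt_succ]
  have hsum : ∑ ε, ∑ k, p ε k ^ 2 = T := by
    rw [sum_comm, hT,
      ← Equiv.sum_comp π fun i => ∑ ε, dist (g ε) (g (flipCoord i ε)) ^ 2]
    refine sum_congr rfl fun k _ => ?_
    exact Equiv.sum_comp (pathPt_invol π k).toPerm
      (fun ε => dist (g ε) (g (flipCoord (π k) ε)) ^ 2)
  have hnn : ∀ ε, 0 ≤ n * ∑ k, p ε k ^ 2 - dist (g ε) (g (negCube ε)) ^ 2 := by
    intro ε
    have h1 : dist (g ε) (g (negCube ε)) ^ 2 ≤ (∑ k, p ε k) ^ 2 :=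
      pow_le_pow_left₀ dist_nonneg (hle ε) 2
    have h2 := sq_sum_le_card_mul_sum_sq (s := (univ : Finset (Fin n))) (f := p ε)
    simp only [card_univ, Fintype.card_fin] at h2
    linarith
  have hd : n * ∑ k, p ε k ^ 2 - dist (g ε) (g (negCube ε)) ^ 2 ≤ n * (η * T) := by
    refine (single_le_sum (f := fun ε => n * ∑ k, p ε k ^ 2 - dist (g ε) (g (negCube ε)) ^ 2)
      (fun ε _ => hnn ε) (mem_univ ε)).trans ?_
    rw [sum_sub_distrib, ← mul_sum, hsum]
    linarith
  have h := cs_defect hn (p ε) _ _ dist_nonneg (hle ε) hd z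
  have hpz : p ε z = dist (g ε) (g (flipCoord i ε)) := by
    have : π z = i := Equiv.swap_apply_left z i
    simp only [p, this]
    simp only [z, hp0]
  rwa [hpz] at h

/-- If all edges are close to `s` and all antipodal distances close to `n s`, the map is almost
`s` times the Hamming distance. -/
lemma near_isometry {n : ℕ} {X : Type} [MetricSpace X] (g : (Fin n → Bool) → X) (s ρ : ℝ)
    (hρ : 0 ≤ ρ)
    (he : ∀ ε i, dist (g ε) (g (flipCoord i ε)) ≤ s + ρ)
    (hA : ∀ ε, n * (s - ρ) ≤ dist (g ε) (g (negCube ε))) (ε δ : Fin n → Bool) :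
    (s - 2 * n * ρ) * hammingDist ε δ ≤ dist (g ε) (g δ) ∧
      dist (g ε) (g δ) ≤ (s + ρ) * hammingDist ε δ := by
  refine ⟨?_, by have := dist_le_of_edges g _ he ε δ; linarith⟩
  by_cases h0 : hammingDist ε δ = 0
  · simp [h0]
  have h1 : (1 : ℝ) ≤ hammingDist ε δ := by exact_mod_cast Nat.one_le_iff_ne_zero.2 h0
  have h2 := dist_triangle (g ε) (g δ) (g (negCube ε))
  have h3 := dist_le_of_edges g _ he δ (negCube ε)
  have h4 : (hammingDist δ (negCube ε) : ℝ) = n - hammingDist ε δ := by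
    have := hammingDist_neg ε δ
    rw [eq_sub_iff_add_eq]; exact_mod_cast this
  rw [h4] at h3
  have h5 := hA ε
  have h6 : 0 ≤ n * ρ * ((hammingDist ε δ : ℝ) - 1) :=
    mul_nonneg (by positivity) (by linarith)
  have h7 : 0 ≤ ρ * (hammingDist ε δ : ℝ) := by positivity
  nlinarith

lemma cube_dichotomy (n : ℕ) (hn : 0 < n) (D : ℝ) (hD : 1 < D) :
    ∃ θ : ℝ, 0 ≤ θ ∧ θ < 1 ∧ ∀ (X : Type) [MetricSpace X] (g : (Fin n → Bool) → X),
      (∑ ε, dist (g ε) (g (negCube ε)) ^ 2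
        ≤ θ * n * ∑ i : Fin n, ∑ ε, dist (g ε) (g (flipCoord i ε)) ^ 2) ∨
      ∃ σ : ℝ, 0 < σ ∧ ∀ ε δ, σ / D * hammingDist ε δ ≤ dist (g ε) (g δ) ∧
        dist (g ε) (g δ) ≤ σ * D * hammingDist ε δ := by
  have hn' : (1 : ℝ) ≤ n := by exact_mod_cast hn
  have hD0 : 0 < D := by linarith
  -- `μ` is the admissible relative error; `q / (1 - q) = μ`
  set μ : ℝ := (1 - 1 / D) / (2 * n) with hμ
  have hD1 : 0 < 1 - 1 / D := by
    rw [sub_pos, div_lt_one hD0]; exact hD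
  have hμ0 : 0 < μ := by positivity
  set q : ℝ := μ / (1 + μ) with hq
  have hq0 : 0 < q := by positivity
  have hq1 : q < 1 := by rw [hq, div_lt_one (by positivity)]; linarith
  set η : ℝ := (q / (2 * n + 1)) ^ 2 / (n * 2 ^ n) with hη
  have hη0 : 0 < η := by positivity
  have h2n : (1 : ℝ) ≤ 2 ^ n := one_le_pow₀ (by norm_num)
  have hη1 : η ≤ 1 := by
    rw [hη, div_le_one (by positivity)]
    have h1 : q / (2 * n + 1) ≤ 1 := by
      rw [div_le_one (by positivity)]; linarith
    have h2 : (q / (2 * n + 1)) ^ 2 ≤ 1 := pow_le_one₀ (by positivity) h1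
    nlinarith
  refine ⟨1 - η, by linarith, by linarith, fun X _ g => ?_⟩
  by_cases hcase : ∑ ε, dist (g ε) (g (negCube ε)) ^ 2
        ≤ (1 - η) * n * ∑ i : Fin n, ∑ ε, dist (g ε) (g (flipCoord i ε)) ^ 2
  · exact Or.inl hcase
  right
  push Not at hcase
  obtain ⟨T, hT⟩ : ∃ T, T = ∑ i : Fin n, ∑ ε, dist (g ε) (g (flipCoord i ε)) ^ 2 := ⟨_, rfl⟩
  rw [← hT] at hcase
  have hT0 : 0 ≤ T := hT ▸ sum_nonneg fun _ _ => sum_nonneg fun _ _ => sq_nonneg _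
  have hedge := edge_near hn g η T hT hcase.le
  set τ := √(η * T) with hτ
  have hτ0 : 0 ≤ τ := Real.sqrt_nonneg _
  let A : (Fin n → Bool) → ℝ := fun ε => dist (g ε) (g (negCube ε)) / n
  have hAflip : ∀ ε i, dist (A ε) (A (flipCoord i ε)) ≤ 2 * τ := by
    intro ε i
    have h1 := abs_le.1 (hedge ε i)
    have h2 := abs_le.1 (hedge (flipCoord i ε) i)
    rw [flipCoord_invol, dist_comm (g (flipCoord i ε)) (g ε)] at h2
    rw [Real.dist_eq, abs_le]
    constructor <;> simp only [A] <;> linarith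
  let o : Fin n → Bool := fun _ => false
  set s := A o with hs
  have hs0 : 0 ≤ s := by positivity
  set ρ := (2 * n + 1) * τ with hρ
  have hρ0 : 0 ≤ ρ := by positivity
  have hAs : ∀ ε, |A ε - s| ≤ 2 * n * τ := by
    intro ε
    have h1 := dist_le_of_edges A _ hAflip ε o
    rw [Real.dist_eq] at h1
    have h2 : (hammingDist ε o : ℝ) ≤ n := by
      have := hammingDist_neg ε o
      exact_mod_cast (by omega : hammingDist ε o ≤ n)
    nlinarith
  have he : ∀ ε i, dist (g ε) (g (flipCoord i ε)) ≤ s + ρ := by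
    intro ε i
    have h1 := abs_le.1 (hedge ε i)
    have h2 := abs_le.1 (hAs ε)
    simp only [A] at h2
    linarith
  have hA : ∀ ε, n * (s - ρ) ≤ dist (g ε) (g (negCube ε)) := by
    intro ε
    have h2 := abs_le.1 (hAs ε)
    have h3 : s - ρ ≤ dist (g ε) (g (negCube ε)) / n := by
      simp only [A] at h2
      linarith
    rwa [le_div_iff₀ (by positivity), mul_comm] at h3
  have hTle : T ≤ n * 2 ^ n * (s + ρ) ^ 2 := by
    rw [hT]
    calc ∑ i : Fin n, ∑ ε, dist (g ε) (g (flipCoord i ε)) ^ 2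
        ≤ ∑ i : Fin n, ∑ ε : Fin n → Bool, (s + ρ) ^ 2 :=
          sum_le_sum fun i _ => sum_le_sum fun ε _ => pow_le_pow_left₀ dist_nonneg (he ε i) 2
      _ = n * 2 ^ n * (s + ρ) ^ 2 := by simp; ring
  have hτle : τ ≤ q / (2 * n + 1) * (s + ρ) := by
    apply Real.sqrt_le_iff.2 ⟨by positivity, ?_⟩
    calc η * T ≤ η * (n * 2 ^ n * (s + ρ) ^ 2) := by gcongr
      _ = (q / (2 * n + 1) * (s + ρ)) ^ 2 := by rw [hη]; field_simp
  have hρq : ρ ≤ q * (s + ρ) := by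
    calc ρ ≤ (2 * n + 1) * (q / (2 * n + 1) * (s + ρ)) := by rw [hρ]; gcongr
      _ = q * (s + ρ) := by field_simp
  have hρs : ρ ≤ μ * s := by
    have h1 : (1 + μ) * ρ ≤ (1 + μ) * (q * (s + ρ)) := by gcongr
    have h2 : (1 + μ) * (q * (s + ρ)) = μ * (s + ρ) := by rw [hq]; field_simp
    linarith
  have hspos : 0 < s := by
    rcases hs0.lt_or_eq with h | h
    · exact h
    -- if `s = 0`, all antipodal distances vanish, contradicting the strict inequality `hcase`
    exfalso
    have hρz : ρ = 0 := le_antisymm (by rw [← h] at hρs; simpa using hρs) hρ0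
    have hz : ∀ ε, dist (g ε) (g (negCube ε)) ^ 2 = 0 := by
      intro ε
      have := dist_le_of_edges g _ he ε (negCube ε)
      rw [← h, hρz] at this
      have h0 : dist (g ε) (g (negCube ε)) = 0 := le_antisymm (by simpa using this) dist_nonneg
      simp [h0]
    simp only [hz, sum_const_zero] at hcase
    have : 0 ≤ (1 - η) * n * T := mul_nonneg (mul_nonneg (by linarith) (by linarith)) hT0
    linarith
  refine ⟨s, hspos, fun ε δ => ?_⟩
  obtain ⟨hl, hu⟩ := near_isometry g s ρ hρ0 he hA ε δ
  have h2nμ : 2 * n * μ = 1 - 1 / D := by rw [hμ]; field_simp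
  have hlow : s / D ≤ s - 2 * n * ρ := by
    have : 2 * n * ρ ≤ 2 * n * (μ * s) := by gcongr
    have h3 : 2 * n * (μ * s) = (1 - 1 / D) * s := by rw [← h2nμ]; ring
    have h4 : (1 - 1 / D) * s = s - s / D := by ring
    linarith
  have hup : s + ρ ≤ s * D := by
    have h1 : μ ≤ 1 - 1 / D := by rw [← h2nμ]; nlinarith
    have h2 : 1 - 1 / D ≤ D - 1 := by
      have : 1 - 1 / D = (D - 1) / D := by field_simp
      rw [this]
      exact div_le_self (by linarith) hD.le
    nlinarith
  constructor
  · refine le_trans ?_ hl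
    gcongr
  · refine hu.trans ?_
    gcongr

/-! ### Block subcubes and iteration over scales -/

/-- Extension of `δ ∈ 2^n` to `ℕ` by `false`. -/
def extB {n : ℕ} (δ : Fin n → Bool) (k : ℕ) : Bool := if h : k < n then δ ⟨k, h⟩ else false

/-- Flip the coordinates of `x ∈ 2^l` in the interval `[a, a + s)`. -/
def flipI {l : ℕ} (a s : ℕ) (x : Fin l → Bool) : Fin l → Bool :=
  fun t => if a ≤ t ∧ (t : ℕ) < a + s then !(x t) else x t

/-- The block subcube through `x`: the point obtained from `x` by flipping, for every `i` with
`δ i = true`, the block `[a + i s, a + (i + 1) s)`. -/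
def blk {l n : ℕ} (a s : ℕ) (δ : Fin n → Bool) (x : Fin l → Bool) : Fin l → Bool :=
  fun t => xor (x t) (decide (a ≤ t) && extB δ ((t - a) / s))

lemma blk_invol {l n : ℕ} (a s : ℕ) (δ : Fin n → Bool) :
    Function.Involutive (blk (l := l) a s δ) := by
  intro x
  funext t
  simp [blk]

lemma blk_neg {l n : ℕ} (a s : ℕ) (hs : 0 < s) (δ : Fin n → Bool) (x : Fin l → Bool) :
    blk a s (negCube δ) x = flipI a (n * s) (blk a s δ x) := by
  funext t
  by_cases h1 : a ≤ t
  · have h2 : (t - a) / s < n ↔ (t : ℕ) < a + n * s := by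
      rw [Nat.div_lt_iff_lt_mul hs]; omega
    by_cases h3 : (t - a) / s < n
    · have h4 := h2.1 h3
      simp [blk, flipI, h1, extB, h3, h4, negCube]
    · have h4 := h2.not.1 h3
      simp [blk, flipI, h1, extB, h3, h4]
  · simp [blk, flipI, h1]

lemma blk_flip {l n : ℕ} (a s : ℕ) (hs : 0 < s) (δ : Fin n → Bool) (i : Fin n)
    (x : Fin l → Bool) :
    blk a s (flipCoord i δ) x = flipI (a + i * s) s (blk a s δ x) := by
  funext t
  have key : (a + i * s ≤ t ∧ (t : ℕ) < a + i * s + s) ↔ (a ≤ t ∧ (t - a) / s = i) := by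
    constructor
    · rintro ⟨h1, h2⟩
      refine ⟨by omega, ?_⟩
      rw [Nat.div_eq_iff hs]
      constructor
      · omega
      · rw [Nat.mul_comm] at *; omega
    · rintro ⟨h1, h2⟩
      rw [Nat.div_eq_iff hs] at h2
      omega
  simp only [flipI, key]
  by_cases h1 : a ≤ t
  · by_cases h2 : (t - a) / s = i
    · simp [blk, h1, extB, h2, flipCoord]
    · by_cases h3 : (t - a) / s < n
      · have : (⟨(t - a) / s, h3⟩ : Fin n) ≠ i := fun h => h2 (by rw [← h])
        simp [blk, h1, extB, h2, h3, flipCoord, this]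
      · simp [blk, h1, extB, h2, h3]
  · simp [blk, h1]

/-- A block subcube with blocks of size `s` inside `2^l` is a copy of `2^n` scaled by `s`. -/
lemma blk_hammingDist {l n : ℕ} (a s : ℕ) (hs : 0 < s) (hl : a + n * s ≤ l)
    (δ δ' : Fin n → Bool) (x : Fin l → Bool) :
    hammingDist (blk a s δ x) (blk a s δ' x) = s * hammingDist δ δ' := by
  -- the differing coordinates are `a + i s + r` with `δ i ≠ δ' i` and `r < s`
  have hb : ∀ p : Fin n × Fin s, a + p.1 * s + p.2 < l := by
    rintro ⟨i, r⟩
    have h1 : (i + 1) * s ≤ n * s := Nat.mul_le_mul_right s i.2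
    have := r.2
    simp only
    rw [add_mul] at h1
    omega
  have hval : ∀ (γ : Fin n → Bool) (i : Fin n) (r : Fin s),
      extB γ ((a + i * s + r - a) / s) = γ i := by
    intro γ i r
    have : (a + i * s + r - a) / s = i := by
      rw [show a + i * s + r - a = r + i * s by omega, Nat.add_mul_div_right _ _ hs,
        Nat.div_eq_of_lt r.2, zero_add]
    simp [extB, this]
  have hcard : s * hammingDist δ δ'
      = ((univ.filter fun i => δ i ≠ δ' i) ×ˢ (univ : Finset (Fin s))).card := by
    rw [card_product, card_univ, Fintype.card_fin, mul_comm]; rfl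
  rw [hcard]
  symm
  apply card_bij (fun p _ => (⟨a + p.1 * s + p.2, hb p⟩ : Fin l))
  · rintro ⟨i, r⟩ h
    have h : δ i ≠ δ' i := by simpa using h
    rw [mem_filter]
    simp only [mem_univ, true_and, blk, hval]
    rw [decide_eq_true (by omega)]
    simpa using h
  · rintro ⟨i, r⟩ _ ⟨i', r'⟩ _ h
    have h : a + i * s + r = a + i' * s + r' := by simpa using h
    have h1 : (r + i * s : ℕ) = r' + i' * s := by omega
    have hi : (i : ℕ) = i' := by
      have := congrArg (· / s) h1
      simpa [Nat.add_mul_div_right _ _ hs, Nat.div_eq_of_lt r.2, Nat.div_eq_of_lt r'.2] using this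
    have hr : (r : ℕ) = r' := by rw [hi] at h1; omega
    exact Prod.ext (Fin.ext hi) (Fin.ext hr)
  · intro t ht
    have ht : blk a s δ x t ≠ blk a s δ' x t := by simpa using ht
    by_cases h1 : a ≤ t
    · by_cases h3 : (t - a) / s < n
      · refine ⟨(⟨(t - a) / s, h3⟩, ⟨(t - a) % s, Nat.mod_lt _ hs⟩), ?_, ?_⟩
        · simpa [blk, h1, extB, h3] using ht
        · apply Fin.ext
          have := Nat.div_add_mod' (t - a : ℕ) s
          simp only
          omega
      · simp [blk, extB, h3] at ht
    · simp [blk, h1] at ht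

/-- One step between scales: if `θ`-improvement holds on every block subcube with blocks of size
`s`, averaging over translates bounds flips of intervals of length `n s` by flips of intervals of
length `s`. -/
lemma interval_step {l n : ℕ} {X : Type} [MetricSpace X] (h : (Fin l → Bool) → X) (θ : ℝ)
    (a s : ℕ) (hs : 0 < s)
    (hbad : ∀ x, ∑ δ : Fin n → Bool, dist (h (blk a s δ x)) (h (blk a s (negCube δ) x)) ^ 2
      ≤ θ * n * ∑ i : Fin n, ∑ δ : Fin n → Bool,
        dist (h (blk a s δ x)) (h (blk a s (flipCoord i δ) x)) ^ 2) :
    ∑ x, dist (h x) (h (flipI a (n * s) x)) ^ 2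
      ≤ θ * n * ∑ i : Fin n, ∑ x, dist (h x) (h (flipI (a + i * s) s x)) ^ 2 := by
  -- translation by a fixed block pattern permutes the cube
  have hre : ∀ b r, ∑ x : Fin l → Bool, ∑ δ : Fin n → Bool,
      dist (h (blk a s δ x)) (h (flipI b r (blk a s δ x))) ^ 2
      = 2 ^ n * ∑ x, dist (h x) (h (flipI b r x)) ^ 2 := by
    intro b r
    rw [sum_comm]
    have : ∀ δ : Fin n → Bool, ∑ x : Fin l → Bool,
        dist (h (blk a s δ x)) (h (flipI b r (blk a s δ x))) ^ 2
        = ∑ x, dist (h x) (h (flipI b r x)) ^ 2 := fun δ =>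
      Equiv.sum_comp (blk_invol a s δ).toPerm (fun x => dist (h x) (h (flipI b r x)) ^ 2)
    simp [this]
  have hsum := sum_le_sum fun x (_ : x ∈ (univ : Finset (Fin l → Bool))) => hbad x
  simp only [blk_neg a s hs, blk_flip a s hs] at hsum
  rw [hre, ← mul_sum, sum_comm] at hsum
  simp only [hre] at hsum
  rw [← mul_sum] at hsum
  have h2 : (0 : ℝ) < 2 ^ n := by positivity
  refine le_of_mul_le_mul_left ?_ h2
  linarith

lemma interval_sum_le {l n : ℕ} (hn : 0 < n) {X : Type} [MetricSpace X]
    (h : (Fin l → Bool) → X) (θ m : ℝ) (hθ : 0 ≤ θ)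
    (hm : ∀ i : Fin l, ∑ x, dist (h x) (h (flipCoord i x)) ^ 2 ≤ m)
    (hbad : ∀ a s, 0 < s → a + n * s ≤ l → ∀ x,
      ∑ δ : Fin n → Bool, dist (h (blk a s δ x)) (h (blk a s (negCube δ) x)) ^ 2
      ≤ θ * n * ∑ i : Fin n, ∑ δ : Fin n → Bool,
        dist (h (blk a s δ x)) (h (blk a s (flipCoord i δ) x)) ^ 2)
    (j a : ℕ) (ha : a + n ^ j ≤ l) :
    ∑ x, dist (h x) (h (flipI a (n ^ j) x)) ^ 2 ≤ θ ^ j * (n ^ j) ^ 2 * m := by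
  induction j generalizing a with
  | zero =>
    simp only [pow_zero, one_pow, one_mul] at ha ⊢
    refine le_trans (le_of_eq ?_) (hm ⟨a, by omega⟩)
    refine sum_congr rfl fun x _ => ?_
    congr 3
    funext t
    by_cases ht : t = ⟨a, by omega⟩
    · subst ht; simp [flipI, flipCoord]
    · have h' : ¬ (a ≤ t ∧ (t : ℕ) < a + 1) := fun hh => ht (Fin.ext (by simp only; omega))
      simp only [flipI, if_neg h', flipCoord, Function.update_of_ne ht]
  | succ j ih =>
    have hpos : 0 < n ^ j := pow_pos hn j
    rw [pow_succ'] at ha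
    have h1 := interval_step h θ a (n ^ j) hpos (hbad a (n ^ j) hpos ha)
    rw [pow_succ' n j]
    refine h1.trans ?_
    have h2 : ∑ i : Fin n, ∑ x, dist (h x) (h (flipI (a + i * n ^ j) (n ^ j) x)) ^ 2
        ≤ ∑ _i : Fin n, θ ^ j * (n ^ j) ^ 2 * m := by
      refine sum_le_sum fun i _ => ih _ ?_
      have : (i + 1) * n ^ j ≤ n * n ^ j := Nat.mul_le_mul_right _ i.2
      rw [add_mul] at this
      omega
    rw [sum_const, card_univ, Fintype.card_fin, nsmul_eq_mul] at h2
    calc _ ≤ θ * n * (n * (θ ^ j * (n ^ j) ^ 2 * m)) := by gcongr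
      _ = _ := by ring

/-- Every map with bounded distortion `K` on a sufficiently large cube is almost isometric, up to
scaling, on some scaled copy of `2^n`. -/
lemma exists_good_subcube (n : ℕ) (hn : 0 < n) (D : ℝ) (hD : 1 < D) (K : ℝ) :
    ∃ l : ℕ, 0 < l ∧ ∀ (X : Type) [MetricSpace X] (h : (Fin l → Bool) → X) (α β : ℝ),
      0 < α → β ≤ K * α →
      (∀ ε δ, α * hdist l ε δ ≤ dist (h ε) (h δ) ∧ dist (h ε) (h δ) ≤ β * hdist l ε δ) →
      ∃ s : ℕ, 0 < s ∧ ∃ f : (Fin n → Bool) → (Fin l → Bool),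
        (∀ ε δ, hammingDist (f ε) (f δ) = s * hammingDist ε δ) ∧
        ∃ σ : ℝ, 0 < σ ∧ ∀ ε δ, σ / D * hammingDist ε δ ≤ dist (h (f ε)) (h (f δ)) ∧
          dist (h (f ε)) (h (f δ)) ≤ σ * D * hammingDist ε δ := by
  obtain ⟨θ, hθ0, hθ1, hdich⟩ := cube_dichotomy n hn D hD
  obtain ⟨k, hk⟩ : ∃ k : ℕ, θ ^ k * K ^ 2 < 1 := by
    have h1 : Filter.Tendsto (fun k : ℕ => θ ^ k * K ^ 2) Filter.atTop (nhds (0 * K ^ 2)) :=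
      (tendsto_pow_atTop_nhds_zero_of_lt_one hθ0 hθ1).mul_const _
    rw [zero_mul] at h1
    exact (h1.eventually (gt_mem_nhds one_pos)).exists
  have hl : 0 < n ^ k := pow_pos hn k
  refine ⟨n ^ k, hl, fun X _ h α β hα hβK hh => ?_⟩
  by_contra hno
  obtain ⟨l, hlk⟩ : ∃ l, l = n ^ k := ⟨_, rfl⟩
  rw [← hlk] at hl
  have hl' : (0 : ℝ) < l := by exact_mod_cast hl
  have hself : ∀ ε : Fin (n ^ k) → Bool, hdist (n ^ k) ε (negCube ε) = 1 := by
    intro ε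
    rw [hdist_eq, hammingDist_self_neg, ← hlk]
    exact div_self hl'.ne'
  have hβ : 0 ≤ β := by
    have h1 := hh (fun _ => false) (negCube fun _ => false)
    rw [hself] at h1
    linarith
  have hbad : ∀ a s, 0 < s → a + n * s ≤ n ^ k → ∀ x : Fin (n ^ k) → Bool,
      ∑ δ : Fin n → Bool, dist (h (blk a s δ x)) (h (blk a s (negCube δ) x)) ^ 2
      ≤ θ * n * ∑ i : Fin n, ∑ δ : Fin n → Bool,
        dist (h (blk a s δ x)) (h (blk a s (flipCoord i δ) x)) ^ 2 := by
    intro a s hs has x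
    rcases hdich X (fun δ => h (blk a s δ x)) with h1 | ⟨σ, hσ, h1⟩
    · exact h1
    · exact absurd ⟨s, hs, fun δ => blk a s δ x,
        fun ε δ => blk_hammingDist a s hs has ε δ x, σ, hσ, h1⟩ hno
  have hm : ∀ i : Fin (n ^ k), ∑ x, dist (h x) (h (flipCoord i x)) ^ 2
      ≤ 2 ^ (n ^ k) * (β / l) ^ 2 := by
    intro i
    have h1 : ∀ x ∈ (univ : Finset (Fin (n ^ k) → Bool)),
        dist (h x) (h (flipCoord i x)) ^ 2 ≤ (β / l) ^ 2 := by
      intro x _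
      refine pow_le_pow_left₀ dist_nonneg ((hh x (flipCoord i x)).2.trans (le_of_eq ?_)) 2
      rw [hdist_eq, hammingDist_self_flip, ← hlk]
      push_cast
      ring
    refine (sum_le_sum h1).trans (le_of_eq ?_)
    simp
  have hfin := interval_sum_le hn h θ _ hθ0 hm hbad k 0 (by simp)
  have hlow : 2 ^ (n ^ k) * α ^ 2 ≤ ∑ x, dist (h x) (h (flipI 0 (n ^ k) x)) ^ 2 := by
    have h1 : ∀ x ∈ (univ : Finset (Fin (n ^ k) → Bool)),
        α ^ 2 ≤ dist (h x) (h (flipI 0 (n ^ k) x)) ^ 2 := by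
      intro x _
      have : flipI 0 (n ^ k) x = negCube x := by funext t; simp [flipI, negCube]
      rw [this]
      refine pow_le_pow_left₀ hα.le ?_ 2
      have := (hh x (negCube x)).1
      rwa [hself, mul_one] at this
    refine le_trans (le_of_eq ?_) (sum_le_sum h1)
    simp
  have hfin2 : (2 : ℝ) ^ (n ^ k) * α ^ 2 ≤ 2 ^ (n ^ k) * (θ ^ k * β ^ 2) := by
    refine (hlow.trans hfin).trans (le_of_eq ?_)
    have : (n : ℝ) ^ k = l := by rw [hlk]; push_cast; rfl
    rw [this]
    field_simp
  have hfin3 := le_of_mul_le_mul_left hfin2 (by positivity)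
  have h5 : β ^ 2 ≤ (K * α) ^ 2 := pow_le_pow_left₀ hβ hβK 2
  have h6 : θ ^ k * β ^ 2 ≤ θ ^ k * (K * α) ^ 2 := by gcongr
  have h7 : 0 < α ^ 2 := by positivity
  nlinarith

/-! ### From distortion to two-sided bounds -/

/-- An injective map on the cube of distortion at most `D` satisfies two-sided bounds with ratio
`D`. -/
lemma bounds_of_distortion {l : ℕ} (hl : 0 < l) {X : Type} [MetricSpace X]
    (f : (Fin l → Bool) → X) (hf : Function.Injective f) (D : ℝ) (hD : cubeDistortion f ≤ D) :
    ∃ L : ℝ, 0 < L ∧ ∀ ε δ, L / D * hdist l ε δ ≤ dist (f ε) (f δ) ∧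
      dist (f ε) (f δ) ≤ L * hdist l ε δ := by
  have hl' : (0 : ℝ) < l := by exact_mod_cast hl
  have hfin : ∀ φ : (Fin l → Bool) → (Fin l → Bool) → ℝ, ∀ ε δ,
      φ ε δ ≤ sSup {r : ℝ | ∃ ε δ, r = φ ε δ} := by
    intro φ ε δ
    refine le_csSup (Set.Finite.bddAbove ?_) ⟨ε, δ, rfl⟩
    refine (Set.finite_range fun p : (Fin l → Bool) × (Fin l → Bool) => φ p.1 p.2).subset ?_
    rintro r ⟨ε, δ, rfl⟩
    exact ⟨(ε, δ), rfl⟩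
  have h1 : ∀ ε δ, dist (f ε) (f δ) / hdist l ε δ ≤ cubeLip f :=
    hfin fun ε δ => dist (f ε) (f δ) / hdist l ε δ
  have h2 : ∀ ε δ, hdist l ε δ / dist (f ε) (f δ) ≤ cubeCoLip f :=
    hfin fun ε δ => hdist l ε δ / dist (f ε) (f δ)
  have hpos : ∀ ε δ, ε ≠ δ → 0 < hdist l ε δ := by
    intro ε δ hne
    have : 0 < hammingDist ε δ := hammingDist_pos.2 hne
    rw [hdist_eq]
    positivity
  let o : Fin l → Bool := fun _ => false
  have hne : o ≠ negCube o := fun h => by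
    have := congrFun h ⟨0, hl⟩
    simp [o, negCube] at this
  have hdp : ∀ ε δ, ε ≠ δ → 0 < dist (f ε) (f δ) := fun ε δ h => dist_pos.2 (hf.ne h)
  have hL : 0 < cubeLip f := (div_pos (hdp _ _ hne) (hpos _ _ hne)).trans_le (h1 _ _)
  have hC : 0 < cubeCoLip f := (div_pos (hpos _ _ hne) (hdp _ _ hne)).trans_le (h2 _ _)
  have hDpos : 0 < D := (mul_pos hL hC).trans_le hD
  refine ⟨cubeLip f, hL, fun ε δ => ?_⟩
  by_cases heq : ε = δ
  · subst heq; simp [hdist_eq]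
  have h3 := h1 ε δ
  have h4 := h2 ε δ
  rw [div_le_iff₀ (hpos _ _ heq)] at h3
  rw [div_le_iff₀ (hdp _ _ heq)] at h4
  refine ⟨?_, h3⟩
  rw [div_mul_eq_mul_div, div_le_iff₀ hDpos]
  calc cubeLip f * hdist l ε δ ≤ cubeLip f * (cubeCoLip f * dist (f ε) (f δ)) := by gcongr
    _ = cubeDistortion f * dist (f ε) (f δ) := by unfold cubeDistortion; ring
    _ ≤ D * dist (f ε) (f δ) := by gcongr
    _ = dist (f ε) (f δ) * D := mul_comm _ _

/-- Lemma 5.1 (criterion for `c(𝓕) ≥ Θ`). -/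
theorem cConst_criterion (𝓕 : Set MetricMap) (lam : ℝ) (hlam : 0 < lam)
    (hLip : ∀ G ∈ 𝓕, ∀ x y : G.X, dist (G.F x) (G.F y) ≤ lam * dist x y)
    (Θ : ℝ) (hΘ : 0 < Θ)
    (hyp : ∀ ϑ : ℝ, 0 < ϑ → ϑ < Θ → ∀ D : ℝ, 1 < D → ∀ l : ℕ, 0 < l →
      ∃ G ∈ 𝓕, ∃ h : (Fin l → Bool) → G.X,
        Function.Injective (fun ε => G.F (h ε)) ∧
        cubeDistortion (fun ε => G.F (h ε)) ≤ D ∧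
        ∀ ε₁ ε₂ : Fin l → Bool,
          ϑ * dist (h ε₁) (h ε₂) ≤ dist (G.F (h ε₁)) (G.F (h ε₂))) :
    Θ ≤ cConst 𝓕 := by
  refine le_of_forall_lt fun ϑ' hϑ' => ?_
  obtain ⟨ϑ, hmax, hϑ⟩ := exists_between (max_lt hϑ' hΘ)
  have hϑ0 : 0 < ϑ := (le_max_right _ _).trans_lt hmax
  refine ((le_max_left _ _).trans_lt hmax).trans_le ?_
  refine le_csSup ⟨lam * 4, ?_⟩ ⟨hϑ0, ?_⟩
  · -- the set is bounded above: compare an antipodal pair for `n = 1`, `D = 2`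
    rintro c ⟨hc, hcw⟩
    obtain ⟨G, hG, f, a, b, ha, hb, hab, hf⟩ := hcw 2 (by norm_num) 1 one_pos
    obtain ⟨-, h2, h3, -⟩ := hf (fun _ => false) (negCube fun _ => false)
    have h4 := hLip G hG (f fun _ => false) (f (negCube fun _ => false))
    rw [hdist_eq, hammingDist_self_neg] at h2 h3
    simp only [Nat.cast_one, div_one, mul_one] at h2 h3
    have h5 : lam * dist (f fun _ => false) (f (negCube fun _ => false)) ≤ lam * (a * 2) := by
      gcongr
    have h6 : a * c ≤ a * (lam * 4) := by linarith
    exact le_of_mul_le_mul_left h6 ha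
  · intro D hD n hn
    have hD0 : 0 < D := by linarith
    have hn' : (0 : ℝ) < n := by exact_mod_cast hn
    have hD1 : 1 < √D := by rw [Real.lt_sqrt zero_le_one]; simpa using hD
    have hDD : √D * √D = D := Real.mul_self_sqrt hD0.le
    obtain ⟨l, hl, hgood⟩ := exists_good_subcube n hn (√D) hD1 (lam * D / ϑ)
    have hl' : (0 : ℝ) < l := by exact_mod_cast hl
    obtain ⟨G, hG, h, hinj, hdistort, hco⟩ := hyp ϑ hϑ0 hϑ D hD l hl
    obtain ⟨L, hL, hLb⟩ := bounds_of_distortion hl _ hinj D hdistort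
    obtain ⟨s, hs, f, hfs, σ, hσ, hfσ⟩ := hgood G.X h (L / (D * lam)) (L / ϑ) (by positivity)
      (le_of_eq (by field_simp)) (by
        intro ε δ
        obtain ⟨h1, h2⟩ := hLb ε δ
        have h3 := hLip G hG (h ε) (h δ)
        have h4 := hco ε δ
        constructor
        · have h5 := h1.trans h3
          have h6 : lam * (L / (D * lam) * hdist l ε δ) = L / D * hdist l ε δ := by field_simp
          exact le_of_mul_le_mul_left (h6.trans_le h5) hlam
        · have h5 := h4.trans h2
          have h6 : ϑ * (L / ϑ * hdist l ε δ) = L * hdist l ε δ := by field_simp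
          exact le_of_mul_le_mul_left (h5.trans_eq h6.symm) hϑ0)
    have hs' : (0 : ℝ) < s := by exact_mod_cast hs
    have hscale : ∀ ε δ, hdist l (f ε) (f δ) = s * n / l * hdist n ε δ := by
      intro ε δ
      rw [hdist_eq, hdist_eq, hfs]
      push_cast
      field_simp
    have hham : ∀ ε δ : Fin n → Bool, (hammingDist ε δ : ℝ) = n * hdist n ε δ := by
      intro ε δ
      rw [hdist_eq]
      field_simp
    have hnn : ∀ ε δ : Fin n → Bool, 0 ≤ hdist n ε δ := by
      intro ε δ
      rw [hdist_eq]
      positivity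
    -- taking the lower constant on the `X` side for `a` gives `a * ϑ ≤ b` without further loss
    refine ⟨G, hG, fun ε => h (f ε), σ * n / √D, L * (s * n / l), by positivity, by positivity,
      ?_, ?_⟩
    · let o : Fin n → Bool := fun _ => false
      have h1 := (hfσ o (negCube o)).1
      have h2 := hco (f o) (f (negCube o))
      have h3 := (hLb (f o) (f (negCube o))).2
      have h4 : hdist n o (negCube o) = 1 := by
        rw [hdist_eq, hammingDist_self_neg]
        exact div_self hn'.ne'
      rw [hscale, h4, mul_one] at h3
      rw [hham, h4, mul_one] at h1
      calc σ * n / √D * ϑ = ϑ * (σ / √D * n) := by ring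
        _ ≤ ϑ * dist (h (f o)) (h (f (negCube o))) := by gcongr
        _ ≤ _ := h2.trans h3
    · intro ε δ
      obtain ⟨h1, h2⟩ := hfσ ε δ
      obtain ⟨h3, h4⟩ := hLb (f ε) (f δ)
      rw [hham] at h1 h2
      rw [hscale] at h3 h4
      have hx := hnn ε δ
      refine ⟨?_, ?_, ?_, ?_⟩
      · refine le_trans ?_ h1
        rw [← mul_assoc, div_mul_eq_mul_div σ]
        exact mul_le_mul_of_nonneg_right (div_le_self (by positivity) hD.le) hx
      · refine h2.trans (le_of_eq ?_)
        have : σ * n / √D * D = σ * √D * n := by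
          rw [div_mul_eq_mul_div, div_eq_iff (by positivity)]
          rw [← hDD]
          simp only [Real.sqrt_mul_self (Real.sqrt_nonneg D)]
          ring
        rw [this]
        ring
      · refine le_trans (le_of_eq ?_) h3
        ring
      · refine h4.trans ?_
        rw [← mul_assoc]
        refine mul_le_mul_of_nonneg_right ?_ hx
        exact le_mul_of_one_le_right (by positivity) hD.le
end
end

section
/- If 𝓕 is a uniformly Lipschitz family of maps between metric spaces, i.e. sup_{F∈𝓕} Lip(F) ∈ (0,∞), then the sequence (a_n(𝓕))_{n=1}^∞ converges and lim_n a_n(𝓕) = inf_n a_n(𝓕). -/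
/-!
The theorem follows from the comparison `a_N ≤ (1 + n / N) * a_n` for all `n, N ≥ 1`: letting
`N → ∞` gives `limsup a_N ≤ a_n` for each `n`, hence `limsup a_N ≤ inf a_n`.

For the comparison, split the `N` coordinates into `n` blocks by residue modulo `n`, so that each
block has at most `N / n + 1` elements. Given `f : 2^N → X` and `δ ∈ 2^N`, let `g_δ : 2^n → X` send
`ε` to the value of `f` at `δ` with the `i`-th block multiplied by `ε i`. Then
`Lip g_δ ≤ (1 + n / N) Lip f`, and `g_δ (-ε)` is the value of `f` at the antipode. Applying the
inequality defining `a_n` to `g_δ` and averaging over `δ` gives the inequality for `f`, because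
multiplication by a fixed sign vector preserves the uniform measure on `2^N`
(`mem_aSet_of_mem_aSet`). The uniform Lipschitz hypothesis enters only to show that the sets whose
infima define `a_n` are nonempty (`lam_mem_aSet`).
-/

open Finset

noncomputable section

/-- `a_n(𝓕)`: infimum of those `a > 0` such that for each `F : X → Y` in `𝓕` and each
`f : 2^n → X`, `𝔼 ϱ_Y^f(ε,−ε) ≤ a·Lip(f)`. -/
def aConst (𝓕 : Set MetricMap) (n : ℕ) : ℝ :=
  sInf { a : ℝ | 0 < a ∧ ∀ G ∈ 𝓕, ∀ f : (Fin n → Bool) → G.X,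
    cubeE n (fun ε => dist (G.F (f ε)) (G.F (f (negCube ε)))) ≤ a * cubeLip f }

/-- `b_{p,n}(𝓕)`: infimum of those `b > 0` such that for each `F : X → Y` in `𝓕` and each
`f : 2^n → X`, `𝔼 ϱ_Y^f(ε,−ε)^p ≤ b^p n^{p−1} ∑_i 𝔼 ϱ_X^f(ε,d_iε)^p`. -/
def bConst (𝓕 : Set MetricMap) (p : ℝ) (n : ℕ) : ℝ :=
  sInf { b : ℝ | 0 < b ∧ ∀ G ∈ 𝓕, ∀ f : (Fin n → Bool) → G.X,
    cubeE n (fun ε => dist (G.F (f ε)) (G.F (f (negCube ε))) ^ p)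
      ≤ b ^ p * (n : ℝ) ^ (p - 1) *
        ∑ i : Fin n, cubeE n (fun ε => dist (f ε) (f (flipCoord i ε)) ^ p) }

/-- The set of admissible constants whose infimum is `aConst 𝓕 n`. -/
def aSet (𝓕 : Set MetricMap) (n : ℕ) : Set ℝ :=
  { a : ℝ | 0 < a ∧ ∀ G ∈ 𝓕, ∀ f : (Fin n → Bool) → G.X,
    cubeE n (fun ε => dist (G.F (f ε)) (G.F (f (negCube ε)))) ≤ a * cubeLip f }

lemma hdist_nonneg (n : ℕ) (ε δ : Fin n → Bool) : 0 ≤ hdist n ε δ := by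
  unfold hdist; positivity

lemma hdist_negCube {n : ℕ} (hn : 0 < n) (ε : Fin n → Bool) : hdist n ε (negCube ε) = 1 := by
  have hn' : (n : ℝ) ≠ 0 := by positivity
  simp [hdist, negCube, hn']

lemma dist_le_cubeLip_mul {n : ℕ} (hn : 0 < n) {X : Type} [MetricSpace X]
    (f : (Fin n → Bool) → X) (ε δ : Fin n → Bool) :
    dist (f ε) (f δ) ≤ cubeLip f * hdist n ε δ := by
  by_cases h : ε = δ
  · subst h; simp [hdist]
  · have hpos : 0 < hdist n ε δ := by
      unfold hdist
      obtain ⟨i, hi⟩ := Function.ne_iff.1 h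
      have : 0 < (Finset.univ.filter fun i => ε i ≠ δ i).card :=
        Finset.card_pos.2 ⟨i, by simpa using hi⟩
      positivity
    rw [← div_le_iff₀ hpos]
    refine le_csSup (Set.Finite.bddAbove ?_) ⟨ε, δ, rfl⟩
    refine (Set.finite_range fun p : (Fin n → Bool) × (Fin n → Bool) =>
      dist (f p.1) (f p.2) / hdist n p.1 p.2).subset ?_
    rintro r ⟨a, b, rfl⟩
    exact ⟨(a, b), rfl⟩

lemma cubeLip_nonneg {n : ℕ} {X : Type} [MetricSpace X] (f : (Fin n → Bool) → X) :
    0 ≤ cubeLip f := by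
  refine Real.sSup_nonneg ?_
  rintro r ⟨ε, δ, rfl⟩
  exact div_nonneg dist_nonneg (hdist_nonneg _ _ _)

lemma cubeLip_le {n : ℕ} {X : Type} [MetricSpace X] (f : (Fin n → Bool) → X) {C : ℝ} (hC : 0 ≤ C)
    (h : ∀ ε δ, dist (f ε) (f δ) ≤ C * hdist n ε δ) : cubeLip f ≤ C := by
  refine csSup_le ⟨_, fun _ => true, fun _ => true, rfl⟩ ?_
  rintro r ⟨ε, δ, rfl⟩
  exact div_le_of_le_mul₀ (hdist_nonneg _ _ _) hC (h ε δ)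

/-- A Lipschitz bound for the family is an admissible constant in every dimension, since antipodal
points are at distance `1`. -/
lemma lam_mem_aSet {𝓕 : Set MetricMap} {lam : ℝ} (hlam : 0 < lam)
    (hLip : ∀ G ∈ 𝓕, ∀ x y : G.X, dist (G.F x) (G.F y) ≤ lam * dist x y) {n : ℕ} (hn : 0 < n) :
    lam ∈ aSet 𝓕 n := by
  refine ⟨hlam, fun G hG f => ?_⟩
  unfold cubeE
  rw [div_le_iff₀ (by positivity)]
  have key : ∀ ε ∈ (Finset.univ : Finset (Fin n → Bool)),
      dist (G.F (f ε)) (G.F (f (negCube ε))) ≤ lam * cubeLip f := fun ε _ => by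
    have h := dist_le_cubeLip_mul hn f ε (negCube ε)
    rw [hdist_negCube hn, mul_one] at h
    exact (hLip G hG _ _).trans (mul_le_mul_of_nonneg_left h hlam.le)
  refine (Finset.sum_le_card_nsmul _ _ _ key).trans (le_of_eq ?_)
  simp
  ring

/-- The residue class modulo `n` of an index in `Fin N`: the block containing that coordinate. -/
def blockOf {n : ℕ} (hn : 0 < n) (N : ℕ) (j : Fin N) : Fin n := ⟨j % n, Nat.mod_lt _ hn⟩

lemma card_blockOf_le {n : ℕ} (hn : 0 < n) (N : ℕ) (s : Finset (Fin N)) (i : Fin n) :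
    (s.filter fun j => blockOf hn N j = i).card ≤ N / n + 1 := by
  -- Within a residue class an index is determined by its quotient by `n`.
  rw [← Finset.card_range (N / n + 1)]
  refine Finset.card_le_card_of_injOn (fun j => (j : ℕ) / n) ?_ ?_
  · intro j _
    have := Nat.div_le_div_right (c := n) j.2.le
    simpa using Nat.lt_succ_of_le this
  · intro j hj k hk hjk
    simp only [Finset.coe_filter, Set.mem_ofPred_eq, blockOf, Fin.ext_iff] at hj hk
    apply Fin.ext
    rw [← Nat.div_add_mod j n, ← Nat.div_add_mod k n, hj.2, hk.2]
    simp only at hjk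
    rw [hjk]

/-- The point of `2^N` obtained from `δ` by multiplying each block by the corresponding sign
of `ε`; on `Bool`, multiplication of signs is `xor`. -/
def blockMul {n : ℕ} (hn : 0 < n) {N : ℕ} (δ : Fin N → Bool) (ε : Fin n → Bool) : Fin N → Bool :=
  fun j => xor (δ j) (ε (blockOf hn N j))

lemma blockMul_negCube {n : ℕ} (hn : 0 < n) {N : ℕ} (δ : Fin N → Bool) (ε : Fin n → Bool) :
    blockMul hn δ (negCube ε) = negCube (blockMul hn δ ε) := by
  funext j
  simp [blockMul, negCube]

lemma sum_blockMul {n : ℕ} (hn : 0 < n) {N : ℕ} (ε : Fin n → Bool) (Φ : (Fin N → Bool) → ℝ) :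
    ∑ δ, Φ (blockMul hn δ ε) = ∑ δ, Φ δ := by
  have hinv : Function.Involutive (fun δ : Fin N → Bool => blockMul hn δ ε) := fun δ => by
    funext j
    simp [blockMul]
  exact hinv.bijective.sum_comp Φ

lemma hdist_blockMul_le {n N : ℕ} (hn : 0 < n) (hN : 0 < N) (δ : Fin N → Bool)
    (ε ε' : Fin n → Bool) :
    hdist N (blockMul hn δ ε) (blockMul hn δ ε') ≤ (1 + (n : ℝ) / N) * hdist n ε ε' := by
  have hcard : (Finset.univ.filter fun j => blockMul hn δ ε j ≠ blockMul hn δ ε' j).card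
      ≤ (N / n + 1) * (Finset.univ.filter fun i => ε i ≠ ε' i).card := by
    refine Finset.card_le_mul_card_image_of_maps_to (f := blockOf hn N) ?_ _ ?_
    · intro j hj
      simpa [blockMul] using hj
    · intro i _
      exact card_blockOf_le hn N _ i
  have hcard' : ((Finset.univ.filter fun j => blockMul hn δ ε j ≠ blockMul hn δ ε' j).card : ℝ)
      ≤ ((N / n : ℕ) + 1) * ((Finset.univ.filter fun i => ε i ≠ ε' i).card : ℝ) := by
    exact_mod_cast hcard
  have hdiv : ((N / n : ℕ) : ℝ) ≤ (N : ℝ) / n := Nat.cast_div_le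
  have hn' : (0 : ℝ) < n := by positivity
  have hN' : (0 : ℝ) < N := by positivity
  unfold hdist
  rw [div_le_iff₀ hN']
  calc _ ≤ _ := hcard'
    _ ≤ ((N : ℝ) / n + 1) * ((Finset.univ.filter fun i => ε i ≠ ε' i).card : ℝ) := by gcongr
    _ = _ := by field_simp

lemma cubeLip_blockMul_le {n N : ℕ} (hn : 0 < n) (hN : 0 < N) {X : Type} [MetricSpace X]
    (f : (Fin N → Bool) → X) (δ : Fin N → Bool) :
    cubeLip (fun ε : Fin n → Bool => f (blockMul hn δ ε)) ≤ (1 + (n : ℝ) / N) * cubeLip f := by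
  have hL := cubeLip_nonneg f
  refine cubeLip_le _ (by positivity) fun ε ε' => ?_
  calc _ ≤ cubeLip f * hdist N (blockMul hn δ ε) (blockMul hn δ ε') := dist_le_cubeLip_mul hN _ _ _
    _ ≤ cubeLip f * ((1 + (n : ℝ) / N) * hdist n ε ε') := by
      gcongr
      exact hdist_blockMul_le hn hN _ _ _
    _ = _ := by ring

lemma mem_aSet_of_mem_aSet {𝓕 : Set MetricMap} {n N : ℕ} (hn : 0 < n) (hN : 0 < N) {a : ℝ}
    (ha : a ∈ aSet 𝓕 n) : (1 + (n : ℝ) / N) * a ∈ aSet 𝓕 N := by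
  obtain ⟨ha0, ha⟩ := ha
  refine ⟨by positivity, fun G hG f => ?_⟩
  set Φ : (Fin N → Bool) → ℝ := fun δ => dist (G.F (f δ)) (G.F (f (negCube δ))) with hΦ
  have hδ : ∀ δ ∈ (Finset.univ : Finset (Fin N → Bool)),
      ∑ ε : Fin n → Bool, Φ (blockMul hn δ ε)
        ≤ a * ((1 + (n : ℝ) / N) * cubeLip f) * 2 ^ n := fun δ _ => by
    have h := ha G hG (fun ε : Fin n → Bool => f (blockMul hn δ ε))
    unfold cubeE at h
    rw [div_le_iff₀ (by positivity)] at h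
    simp only [blockMul_negCube] at h
    refine h.trans ?_
    gcongr
    exact cubeLip_blockMul_le hn hN f δ
  have hsum := Finset.sum_le_card_nsmul _ _ _ hδ
  rw [Finset.sum_comm] at hsum
  simp only [sum_blockMul, Finset.sum_const, Finset.card_univ, Fintype.card_pi, Fintype.card_bool,
    Finset.prod_const, Fintype.card_fin, nsmul_eq_mul, Nat.cast_pow, Nat.cast_ofNat] at hsum
  unfold cubeE
  rw [div_le_iff₀ (by positivity)]
  have h2 : (0 : ℝ) < 2 ^ n := by positivity
  refine le_of_mul_le_mul_left (hsum.trans (le_of_eq ?_)) h2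
  ring

lemma bddBelow_aSet (𝓕 : Set MetricMap) (n : ℕ) : BddBelow (aSet 𝓕 n) :=
  ⟨0, fun _ h => h.1.le⟩

lemma aConst_nonneg (𝓕 : Set MetricMap) (n : ℕ) : 0 ≤ aConst 𝓕 n :=
  Real.sInf_nonneg fun _ h => h.1.le

lemma aConst_le_mul {𝓕 : Set MetricMap} {n N : ℕ} (hn : 0 < n) (hN : 0 < N)
    (hne : (aSet 𝓕 n).Nonempty) : aConst 𝓕 N ≤ (1 + (n : ℝ) / N) * aConst 𝓕 n := by
  have hc : 0 < 1 + (n : ℝ) / N := by positivity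
  rw [← div_le_iff₀' hc]
  refine le_csInf hne fun a ha => ?_
  rw [div_le_iff₀' hc]
  exact csInf_le (bddBelow_aSet 𝓕 N) (mem_aSet_of_mem_aSet hn hN ha)

/-- For a uniformly Lipschitz family `𝓕`, the sequence `(a_n(𝓕))_{n ≥ 1}` converges to its
infimum. -/
theorem aConst_tendsto_iInf (𝓕 : Set MetricMap) (lam : ℝ) (hlam : 0 < lam)
    (hLip : ∀ G ∈ 𝓕, ∀ x y : G.X, dist (G.F x) (G.F y) ≤ lam * dist x y) :
    Filter.Tendsto (fun n : ℕ => aConst 𝓕 (n + 1)) Filter.atTop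
      (nhds (⨅ n : ℕ, aConst 𝓕 (n + 1))) := by
  have hbdd : BddBelow (Set.range fun n : ℕ => aConst 𝓕 (n + 1)) :=
    ⟨0, by rintro _ ⟨n, rfl⟩; exact aConst_nonneg 𝓕 _⟩
  refine tendsto_order.2 ⟨fun b hb => Filter.Eventually.of_forall fun N =>
    hb.trans_le (ciInf_le hbdd N), fun b hb => ?_⟩
  obtain ⟨n, hn⟩ := exists_lt_of_ciInf_lt hb
  have hlim : Filter.Tendsto
      (fun N : ℕ => (1 + ((n + 1 : ℕ) : ℝ) / ((N + 1 : ℕ) : ℝ)) * aConst 𝓕 (n + 1))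
      Filter.atTop (nhds ((1 + 0) * aConst 𝓕 (n + 1))) := by
    refine Filter.Tendsto.mul_const _ (Filter.Tendsto.const_add _ ?_)
    exact (Filter.tendsto_add_atTop_iff_nat 1).2
      (tendsto_const_div_atTop_nhds_zero_nat ((n + 1 : ℕ) : ℝ))
  rw [add_zero, one_mul] at hlim
  filter_upwards [hlim.eventually_lt_const hn] with N hN
  exact (aConst_le_mul n.succ_pos N.succ_pos
    ⟨lam, lam_mem_aSet hlam hLip n.succ_pos⟩).trans_lt hN
end
end

section
/- Let 𝓕 be a uniformly Lipschitz family of maps between metric spaces. Then for all k, l ∈ ℕ, a_{kl}(𝓕) ≤ a_l(𝓕). More precisely, for any metric spaces (X,d_X),(Y,d_Y), any map F : X → Y, and any a > 0 such that every g : 2^l → X satisfies 𝔼 ϱ_Y^g(δ,−δ) ≤ a·Lip(g), every f : 2^{kl} → X satisfies 𝔼 ϱ_Y^f(ε,−ε) ≤ a·Lip(f). -/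
/-!
For `ε ∈ 2^{kl}` and `δ ∈ 2^l`, multiply the coordinates of `ε` by those of `δ`, each coordinate
of `δ` being used on a block of `k` coordinates (`twist`). For fixed `ε` this is an isometric
embedding `2^l → 2^{kl}` for the normalized Hamming metrics (`hdist_twist`) that commutes with
`δ ↦ -δ`, so `g_ε = f ∘ twist ε` satisfies `Lip(g_ε) ≤ Lip(f)`, and the hypothesis on `2^l` bounds
`𝔼_δ ϱ(g_ε(δ), g_ε(-δ))` by `a · Lip(f)`. For fixed `δ` the map `ε ↦ twist ε δ` is an involution of
`2^{kl}`, so averaging over `ε` and exchanging the sums gives the pointwise statement.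

The inequality of the constants follows by comparing the infima, once the set defining `a_l(𝓕)` is
known to be nonempty: the uniform Lipschitz constant belongs to it, because `∂(ε, -ε) = 1`.
-/

open Finset

noncomputable section

/-- The point `ε · δ` of `2^{kl}`, where the sign `δ j` acts on all coordinates of the `j`-th block.
The index set `Fin (k * l)` is identified with `Fin k × Fin l`, and the blocks are the fibres of the
second projection. In the Boolean model the product of signs is `xor`. -/
def twist {k l : ℕ} (ε : Fin (k * l) → Bool) (δ : Fin l → Bool) : Fin (k * l) → Bool :=
  fun i => xor (ε i) (δ (finProdFinEquiv.symm i).2)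

lemma twist_negCube {k l : ℕ} (ε : Fin (k * l) → Bool) (δ : Fin l → Bool) :
    twist ε (negCube δ) = negCube (twist ε δ) := by
  funext i
  simp [twist, negCube]

lemma twist_twist {k l : ℕ} (ε : Fin (k * l) → Bool) (δ : Fin l → Bool) :
    twist (twist ε δ) δ = ε := by
  funext i
  simp [twist]

lemma hdist_twist {k l : ℕ} (hk : 0 < k) (ε : Fin (k * l) → Bool) (δ δ' : Fin l → Bool) :
    hdist (k * l) (twist ε δ) (twist ε δ') = hdist l δ δ' := by
  have hcard : (Finset.univ.filter fun i => twist ε δ i ≠ twist ε δ' i).card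
      = k * (Finset.univ.filter fun j => δ j ≠ δ' j).card := by
    simp only [Finset.card_filter]
    rw [← finProdFinEquiv.sum_comp, Fintype.sum_prod_type]
    simp [twist]
  have hk' : (k : ℝ) ≠ 0 := by positivity
  unfold hdist
  rw [hcard]
  push_cast
  exact mul_div_mul_left _ _ hk'

lemma div_hdist_le_cubeLip {n : ℕ} {X : Type} [MetricSpace X] (f : (Fin n → Bool) → X)
    (ε δ : Fin n → Bool) : dist (f ε) (f δ) / hdist n ε δ ≤ cubeLip f := by
  refine le_csSup (Set.Finite.bddAbove ?_) ⟨ε, δ, rfl⟩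
  refine (Set.finite_range fun p : (Fin n → Bool) × (Fin n → Bool) =>
    dist (f p.1) (f p.2) / hdist n p.1 p.2).subset ?_
  rintro r ⟨ε, δ, rfl⟩
  exact ⟨(ε, δ), rfl⟩

lemma cubeLip_twist_le {k l : ℕ} (hk : 0 < k) {X : Type} [MetricSpace X]
    (f : (Fin (k * l) → Bool) → X) (ε : Fin (k * l) → Bool) :
    cubeLip (fun δ => f (twist ε δ)) ≤ cubeLip f := by
  refine csSup_le ⟨_, fun _ => true, fun _ => true, rfl⟩ ?_
  rintro r ⟨δ, δ', rfl⟩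
  rw [← hdist_twist hk ε]
  exact div_hdist_le_cubeLip f _ _

/-- Averages over `2^{kl}` may be computed by averaging first over the twists of a fixed point. -/
lemma cubeE_twist {k l : ℕ} (Φ : (Fin (k * l) → Bool) → ℝ) :
    cubeE (k * l) (fun ε => cubeE l (fun δ => Φ (twist ε δ))) = cubeE (k * l) Φ := by
  have hsum (δ : Fin l → Bool) : ∑ ε : Fin (k * l) → Bool, Φ (twist ε δ) = ∑ ε, Φ ε :=
    Equiv.sum_comp
      (Function.Involutive.toPerm (fun ε => twist ε δ) fun ε => twist_twist ε δ) Φ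
  unfold cubeE
  rw [← Finset.sum_div, Finset.sum_comm]
  simp [hsum]

lemma cubeE_le_of_forall_le {n : ℕ} {Φ : (Fin n → Bool) → ℝ} {c : ℝ} (h : ∀ ε, Φ ε ≤ c) :
    cubeE n Φ ≤ c := by
  unfold cubeE
  rw [div_le_iff₀ (by positivity)]
  calc ∑ ε, Φ ε ≤ ∑ _ε : Fin n → Bool, c := Finset.sum_le_sum fun ε _ => h ε
    _ = c * 2 ^ n := by simp [mul_comm]

lemma cubeE_mul_le {k l : ℕ} (hk : 0 < k) {X Y : Type} [MetricSpace X] [MetricSpace Y]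
    (F : X → Y) (a : ℝ) (ha : 0 < a)
    (hg : ∀ g : (Fin l → Bool) → X,
      cubeE l (fun δ => dist (F (g δ)) (F (g (negCube δ)))) ≤ a * cubeLip g)
    (f : (Fin (k * l) → Bool) → X) :
    cubeE (k * l) (fun ε => dist (F (f ε)) (F (f (negCube ε)))) ≤ a * cubeLip f := by
  rw [← cubeE_twist]
  refine cubeE_le_of_forall_le fun ε => ?_
  simp only [← twist_negCube]
  exact (hg fun δ => f (twist ε δ)).trans
    (mul_le_mul_of_nonneg_left (cubeLip_twist_le hk f ε) ha.le)

/-- `a_{kl}(𝓕) ≤ a_l(𝓕)`, together with the precise pointwise statement. -/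
theorem aConst_mul_le (𝓕 : Set MetricMap) (lam : ℝ) (hlam : 0 < lam)
    (hLip : ∀ G ∈ 𝓕, ∀ x y : G.X, dist (G.F x) (G.F y) ≤ lam * dist x y)
    (k l : ℕ) (hk : 0 < k) (hl : 0 < l) :
    aConst 𝓕 (k * l) ≤ aConst 𝓕 l ∧
    ∀ (X Y : Type) [MetricSpace X] [MetricSpace Y] (F : X → Y) (a : ℝ), 0 < a →
      (∀ g : (Fin l → Bool) → X,
        cubeE l (fun δ => dist (F (g δ)) (F (g (negCube δ)))) ≤ a * cubeLip g) →
      ∀ f : (Fin (k * l) → Bool) → X,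
        cubeE (k * l) (fun ε => dist (F (f ε)) (F (f (negCube ε)))) ≤ a * cubeLip f := by
  refine ⟨?_, fun X Y _ _ F a ha hg f => cubeE_mul_le hk F a ha hg f⟩
  refine csInf_le_csInf ⟨0, fun a ha => ha.1.le⟩ ⟨lam, hlam, fun G hG f => ?_⟩
    fun a ha => ⟨ha.1, fun G hG f => cubeE_mul_le hk G.F a ha.1 (ha.2 G hG) f⟩
  refine cubeE_le_of_forall_le fun ε => (hLip G hG _ _).trans ?_
  have h := div_hdist_le_cubeLip f ε (negCube ε)
  rw [hdist_negCube hl, div_one] at h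
  exact mul_le_mul_of_nonneg_left h hlam.le
end
end

section
/- Let F : ℓ₁ → ℓ₁ be the bounded linear diagonal operator defined by F((a_n)_{n≥1}) = (a_n/log(n+1))_{n≥1}, where log denotes the natural logarithm. Then for every n ∈ ℕ and every ε ∈ {−1,1}^n, ‖F(∑_{i=1}^n ε(i)e_i)‖_{ℓ₁} = ∑_{i=1}^n 1/log(i+1) ≥ n/log(n+1). Consequently, for every 1 < p < ∞ and every C > 0 there exists n ∈ ℕ such that (𝔼_ε ‖F(∑_{i=1}^n ε(i)e_i)‖_{ℓ₁}^p)^{1/p} > C·(∑_{i=1}^n ‖e_i‖_{ℓ₁}^p)^{1/p} = C·n^{1/p}, where 𝔼_ε denotes the average over all ε ∈ {−1,1}^n; i.e., F has no nontrivial Rademacher type. -/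
/-!
On a sign combination of `e 0, …, e (n-1)`, the operator `F` produces a vector whose `i`-th
coordinate has absolute value `1 / log (i + 2)` whatever the signs are, so its `ℓ₁` norm does not
depend on them (`norm_diagonal_signs`). The average over the signs is therefore the single value
`∑_{i<n} 1 / log (i + 2)`, which is at least `n / log (n + 1)` because every summand is at least
`1 / log (n + 1)`. Since `log (n + 1) = o(n ^ (1 - 1/p))`, this lower bound eventually exceeds
`C * n ^ (1/p)` for every `p > 1` (`exists_const_mul_rpow_lt_div_log`).
-/

open Finset

noncomputable section

/-- The Banach space `ℓ₁` of absolutely summable real sequences (indexed from `0`, so the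
coordinate `i` plays the role of the paper's `a_{i+1}`). -/
abbrev ell1 : Type := lp (fun _ : ℕ => ℝ) 1

/-- The unit vector basis of `ℓ₁`; `e i` is the paper's `e_{i+1}`. -/
def e (i : ℕ) : ell1 := lp.single 1 i (1 : ℝ)

lemma norm_e (i : ℕ) : ‖e i‖ = 1 := by
  unfold e
  rw [lp.norm_single (by norm_num)]
  simp

lemma signs_apply (n : ℕ) (s : Fin n → ℝ) (k : ℕ) :
    (∑ i : Fin n, s i • e (i : ℕ) : ell1) k = if h : k < n then s ⟨k, h⟩ else 0 := by
  rw [lp.coeFn_sum, Finset.sum_apply]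
  have hterm : ∀ i : Fin n, (s i • e (i : ℕ) : ell1) k = if (i : ℕ) = k then s i else 0 := by
    intro i
    rw [lp.coeFn_smul, Pi.smul_apply, e, lp.single_apply]
    by_cases h : (i : ℕ) = k
    · subst h; simp
    · simp [h, Ne.symm h]
  rw [Finset.sum_congr rfl fun i _ => hterm i]
  split_ifs with h
  · rw [Finset.sum_eq_single ⟨k, h⟩]
    · simp
    · intro b _ hb
      rw [if_neg]
      exact fun hbk => hb (Fin.ext hbk)
    · simp
  · refine Finset.sum_eq_zero fun i _ => ?_
    rw [if_neg]
    have := i.isLt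
    omega

/-- The image under `F` of a sign combination of basis vectors has a norm independent of the
signs. -/
lemma norm_diagonal_signs (F : ell1 →L[ℝ] ell1)
    (hF : ∀ x : ell1, ∀ i : ℕ, (F x) i = x i / Real.log ((i : ℝ) + 2))
    (n : ℕ) (ε : Fin n → Bool) :
    ‖F (∑ i : Fin n, (if ε i then (1 : ℝ) else -1) • e (i : ℕ))‖
      = ∑ i ∈ Finset.range n, 1 / Real.log ((i : ℝ) + 2) := by
  rw [lp.norm_eq_tsum_rpow (by norm_num)]
  simp only [ENNReal.toReal_one, Real.rpow_one, div_one, hF, signs_apply]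
  rw [tsum_eq_sum (s := Finset.range n)]
  · refine Finset.sum_congr rfl fun k hk => ?_
    have hk' : k < n := Finset.mem_range.mp hk
    have hlog : 0 ≤ Real.log ((k : ℝ) + 2) :=
      Real.log_nonneg (by linarith [Nat.cast_nonneg (α := ℝ) k])
    rw [dif_pos hk', norm_div, Real.norm_of_nonneg hlog]
    split_ifs <;> simp
  · intro k hk
    rw [dif_neg (by simpa using hk)]
    simp

lemma div_log_le_sum (n : ℕ) :
    (n : ℝ) / Real.log ((n : ℝ) + 1) ≤ ∑ i ∈ Finset.range n, 1 / Real.log ((i : ℝ) + 2) := by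
  have h : ∀ i ∈ Finset.range n,
      1 / Real.log ((n : ℝ) + 1) ≤ 1 / Real.log ((i : ℝ) + 2) := by
    intro i hi
    have hin : (i : ℝ) + 1 ≤ n := by exact_mod_cast Finset.mem_range.mp hi
    have hi0 : (0 : ℝ) ≤ i := Nat.cast_nonneg i
    exact one_div_le_one_div_of_le (Real.log_pos (by linarith))
      (Real.log_le_log (by linarith) (by linarith))
  calc (n : ℝ) / Real.log ((n : ℝ) + 1)
      = ∑ _i ∈ Finset.range n, 1 / Real.log ((n : ℝ) + 1) := by
        simp [div_eq_mul_inv]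
    _ ≤ _ := Finset.sum_le_sum h

/-- Because `log` grows slower than the power `1 - 1/p > 0`, the sequence `n / log (n + 1)`
outgrows every multiple of `n ^ (1/p)`. -/
lemma exists_const_mul_rpow_lt_div_log (p : ℝ) (hp : 1 < p) (C : ℝ) (hC : 0 < C) :
    ∃ n : ℕ, 0 < n ∧ C * (n : ℝ) ^ (1 / p) < (n : ℝ) / Real.log ((n : ℝ) + 1) := by
  have hp0 : 0 < p := by linarith
  have hp1 : 1 / p < 1 := (div_lt_one hp0).mpr hp
  have hr : 0 < 1 - 1 / p := by linarith
  have hr1 : 1 - 1 / p ≤ 1 := by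
    have : 0 < 1 / p := by positivity
    linarith
  have ho := (isLittleO_log_rpow_atTop hr).bound (c := 1 / (4 * C)) (by positivity)
  have ht : Filter.Tendsto (fun n : ℕ => (n : ℝ) + 1) Filter.atTop Filter.atTop :=
    Filter.tendsto_atTop_add_const_right _ _ tendsto_natCast_atTop_atTop
  obtain ⟨n, hn, hn0⟩ := ((ht.eventually ho).and (Filter.eventually_gt_atTop 0)).exists
  refine ⟨n, hn0, ?_⟩
  have hn1 : (1 : ℝ) ≤ n := by exact_mod_cast hn0
  have hnpos : (0 : ℝ) < n := by linarith
  have hlog : 0 < Real.log ((n : ℝ) + 1) := Real.log_pos (by linarith)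
  rw [Real.norm_of_nonneg hlog.le, Real.norm_of_nonneg (by positivity)] at hn
  -- Passing from `n + 1` to `n` costs a factor of at most `2 ^ (1 - 1/p) ≤ 2`.
  have hpow : ((n : ℝ) + 1) ^ (1 - 1 / p) ≤ 2 * (n : ℝ) ^ (1 - 1 / p) := by
    calc ((n : ℝ) + 1) ^ (1 - 1 / p) ≤ (2 * (n : ℝ)) ^ (1 - 1 / p) :=
          Real.rpow_le_rpow (by positivity) (by linarith) hr.le
      _ = 2 ^ (1 - 1 / p) * (n : ℝ) ^ (1 - 1 / p) :=
          Real.mul_rpow (by norm_num) hnpos.le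
      _ ≤ 2 * (n : ℝ) ^ (1 - 1 / p) := by
          gcongr
          calc (2 : ℝ) ^ (1 - 1 / p) ≤ 2 ^ (1 : ℝ) :=
                Real.rpow_le_rpow_of_exponent_le (by norm_num) hr1
            _ = 2 := Real.rpow_one 2
  have hmul : (n : ℝ) ^ (1 / p) * (n : ℝ) ^ (1 - 1 / p) = n := by
    rw [← Real.rpow_add hnpos]
    simp
  rw [lt_div_iff₀ hlog]
  calc C * (n : ℝ) ^ (1 / p) * Real.log ((n : ℝ) + 1)
      ≤ C * (n : ℝ) ^ (1 / p) * (1 / (4 * C) * (2 * (n : ℝ) ^ (1 - 1 / p))) := by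
        gcongr
        exact hn.trans (by gcongr)
    _ = (n : ℝ) ^ (1 / p) * (n : ℝ) ^ (1 - 1 / p) / 2 := by
        field_simp
        norm_num
    _ = n / 2 := by rw [hmul]
    _ < n := by linarith

/-- The diagonal operator `F(a_n)_{n≥1} = (a_n / log (n+1))_{n≥1}` on `ℓ₁` has no nontrivial
Rademacher type: its averaged Rademacher sums exceed any multiple of `n^{1/p}`. -/
theorem diagonal_operator_no_type
    (F : ell1 →L[ℝ] ell1)
    (hF : ∀ x : ell1, ∀ i : ℕ, (F x) i = x i / Real.log ((i : ℝ) + 2)) :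
    (∀ n : ℕ, 0 < n → ∀ ε : Fin n → Bool,
      ‖F (∑ i : Fin n, (if ε i then (1 : ℝ) else -1) • e (i : ℕ))‖
          = ∑ i ∈ Finset.range n, 1 / Real.log ((i : ℝ) + 2) ∧
      (n : ℝ) / Real.log ((n : ℝ) + 1)
          ≤ ∑ i ∈ Finset.range n, 1 / Real.log ((i : ℝ) + 2)) ∧
    ∀ p : ℝ, 1 < p → ∀ C : ℝ, 0 < C → ∃ n : ℕ, 0 < n ∧
      (∑ i : Fin n, ‖e (i : ℕ)‖ ^ p) ^ (1 / p) = (n : ℝ) ^ (1 / p) ∧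
      C * (∑ i : Fin n, ‖e (i : ℕ)‖ ^ p) ^ (1 / p)
        < ((∑ ε : Fin n → Bool,
              ‖F (∑ i : Fin n, (if ε i then (1 : ℝ) else -1) • e (i : ℕ))‖ ^ p) / 2 ^ n)
            ^ (1 / p) := by
  refine ⟨fun n _ ε => ⟨norm_diagonal_signs F hF n ε, div_log_le_sum n⟩, ?_⟩
  intro p hp C hC
  obtain ⟨n, hn, hlt⟩ := exists_const_mul_rpow_lt_div_log p hp C hC
  have hsum : (∑ i : Fin n, ‖e (i : ℕ)‖ ^ p) = n := by simp [norm_e]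
  refine ⟨n, hn, by rw [hsum], ?_⟩
  have hS := hlt.trans_le (div_log_le_sum n)
  have hS0 : 0 ≤ ∑ i ∈ Finset.range n, 1 / Real.log ((i : ℝ) + 2) :=
    le_trans (by positivity) hS.le
  -- The norms being the same for all `2 ^ n` sign vectors, the average is their common value.
  have havg : (∑ ε : Fin n → Bool,
      ‖F (∑ i : Fin n, (if ε i then (1 : ℝ) else -1) • e (i : ℕ))‖ ^ p) / 2 ^ n
      = (∑ i ∈ Finset.range n, 1 / Real.log ((i : ℝ) + 2)) ^ p := by
    rw [Finset.sum_congr rfl fun ε _ => by rw [norm_diagonal_signs F hF n ε]]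
    simp
  rw [hsum, havg, one_div, Real.rpow_rpow_inv hS0 (by linarith), ← one_div]
  exact hS
end
end
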